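/- The intersection of Im λ and Im η equals {19/16}. That is: 19/16 ∈ Im λ and 19/16 ∈ Im η, and for all nonzero rational numbers u and v, if λ(u) = η(v) then λ(u) = 19/16. -/

import Mathlib

/-! Basic arithmetic of Gaussian integers -/

def gi : GaussianInt := ⟨0, 1⟩
theorem gi_sq : gi ^ 2 = -1 := by decide
@[simp] theorem gi_re : gi.re = 0 := rfl
@[simp] theorem gi_im : gi.im = 1 := rfl

/-- odd Gaussian integers -/
def od (z : GaussianInt) : Prop := (z.re + z.im) % 2 = 1

theorem od_mul (x y : GaussianInt) : od (x * y) ↔ od x ∧ od y := by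
  unfold od
  have h : (x*y).re + (x*y).im = (x.re+x.im)*(y.re+y.im) - 2 * (x.im*y.im) := by
    simp; ring
  rw [h]
  have := Int.mul_emod (x.re+x.im) (y.re+y.im) 2
  rcases Int.emod_two_eq_zero_or_one (x.re+x.im) with h1 | h1 <;>
  rcases Int.emod_two_eq_zero_or_one (y.re+y.im) with h2 | h2 <;>
  rw [h1, h2] at this <;> omega

theorem od_ne {z : GaussianInt} (h : od z) : z ≠ 0 := by
  rintro rfl; simp [od] at h

theorem not_od {z : GaussianInt} (h : ¬ od z) : ∃ y, z = (1+gi) * y := by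
  unfold od at h
  refine ⟨⟨(z.re+z.im)/2, (z.im - z.re)/2⟩, ?_⟩
  rw [Zsqrtd.ext_iff]; simp
  omega

theorem not_od_mul (y : GaussianInt) : ¬ od ((1+gi)*y) := by
  unfold od; simp; omega

theorem od_neg (z : GaussianInt) : od (-z) ↔ od z := by
  unfold od; simp; omega

theorem od_gi (z : GaussianInt) : od (gi*z) ↔ od z := by
  unfold od; simp; omega

theorem mod8_cases (a : ℤ) : a % 8 = 0 ∨ a % 8 = 1 ∨ a % 8 = 2 ∨ a % 8 = 3 ∨ a % 8 = 4 ∨ a % 8 = 5 ∨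
    a % 8 = 6 ∨ a % 8 = 7 := by omega

theorem od_sq_mod {z : GaussianInt} (h : od z) :
    ((z^2).re % 8 = 1 ∧ (z^2).im % 8 = 0) ∨ ((z^2).re % 8 = 7 ∧ (z^2).im % 8 = 0) ∨
    ((z^2).re % 8 = 3 ∧ (z^2).im % 8 = 4) ∨ ((z^2).re % 8 = 5 ∧ (z^2).im % 8 = 4) := by
  unfold od at h
  obtain ⟨a, b⟩ := z
  have hr : ((⟨a, b⟩ : GaussianInt)^2).re = a*a - b*b := by simp [pow_two]; ring
  have hi : ((⟨a, b⟩ : GaussianInt)^2).im = 2*(a*b) := by simp [pow_two]; ring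
  rw [hr, hi]
  have e1 := Int.mul_emod a a 8
  have e2 := Int.mul_emod b b 8
  have e3 := Int.mul_emod a b 8
  change (a + b) % 2 = 1 at h
  rcases mod8_cases a with ha | ha | ha | ha | ha | ha | ha | ha <;>
  rcases mod8_cases b with hb | hb | hb | hb | hb | hb | hb | hb <;>
  rw [ha] at e1 e3 <;> rw [hb] at e2 e3 <;> norm_num at e1 e2 e3 <;> omega

theorem od_four_mod {z : GaussianInt} (h : od z) :
    ((z^4).re % 8 = 1 ∧ (z^4).im % 8 = 0) := by
  have h2 := od_sq_mod h
  have : z^4 = z^2*z^2 := by ring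
  rw [this]
  generalize z^2 = w at *
  obtain ⟨a, b⟩ := w
  have hr : ((⟨a, b⟩ : GaussianInt) * ⟨a, b⟩).re = a*a - b*b := by simp; ring
  have hi : ((⟨a, b⟩ : GaussianInt) * ⟨a, b⟩).im = 2*(a*b) := by simp; ring
  rw [hr, hi]
  have e1 := Int.mul_emod a a 8
  have e2 := Int.mul_emod b b 8
  have e3 := Int.mul_emod a b 8
  simp only at h2
  rcases h2 with ⟨ha, hb⟩ | ⟨ha, hb⟩ | ⟨ha, hb⟩ | ⟨ha, hb⟩ <;>
  rw [ha] at e1 e3 <;> rw [hb] at e2 e3 <;> norm_num at e1 e2 e3 <;> omega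

theorem unit_cases {u : GaussianInt} (h : IsUnit u) : u = 1 ∨ u = -1 ∨ u = gi ∨ u = -gi := by
  obtain ⟨v, hv⟩ := h.exists_right_inv
  have hn : u.norm * v.norm = 1 := by rw [← Zsqrtd.norm_mul, hv]; rfl
  have h1 : u.norm = 1 := by
    have := Int.eq_one_or_neg_one_of_mul_eq_one hn
    have h0 := GaussianInt.norm_nonneg u
    omega
  obtain ⟨a, b⟩ := u
  simp only [Zsqrtd.norm] at h1
  have h1 : a*a + b*b = 1 := by linarith
  have ha : a ≤ 1 := by nlinarith
  have ha' : -1 ≤ a := by nlinarith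
  have hb : b ≤ 1 := by nlinarith
  have hb' : -1 ≤ b := by nlinarith
  simp only [Zsqrtd.ext_iff]
  interval_cases a <;> interval_cases b <;> simp_all

theorem unit_four {u : GaussianInt} (h : IsUnit u) : u^4 = 1 := by
  rcases unit_cases h with rfl | rfl | rfl | rfl <;> decide

theorem prime_of_norm {z : GaussianInt} (h : z.norm.natAbs.Prime) : Prime z := by
  rw [← irreducible_iff_prime]
  constructor
  · intro hu
    rw [← Zsqrtd.norm_eq_one_iff] at hu
    rw [hu] at h; exact Nat.not_prime_one h
  · intro a b hab
    rw [hab, Zsqrtd.norm_mul, Int.natAbs_mul] at h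
    rcases Nat.prime_mul_iff.1 h with h | h
    · right; rw [← Zsqrtd.norm_eq_one_iff]; exact h.2
    · left; rw [← Zsqrtd.norm_eq_one_iff]; exact h.2

theorem prime_two : Prime (1+gi) := prime_of_norm (by
  have : (1+gi).norm = 2 := by decide
  rw [this]; norm_num)
theorem prime_q : Prime (1+2*gi) := prime_of_norm (by
  have : (1+2*gi).norm = 5 := by decide
  rw [this]; norm_num)
theorem prime_e : Prime (1+4*gi) := prime_of_norm (by
  have : (1+4*gi).norm = 17 := by decide
  rw [this]; norm_num)
theorem prime_c : Prime (1-4*gi) := prime_of_norm (by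
  have : (1-4*gi).norm = 17 := by decide
  rw [this]; norm_num)

theorem od_iff (z : GaussianInt) : od z ↔ ¬ (1+gi) ∣ z := by
  constructor
  · rintro h ⟨y, rfl⟩; exact not_od_mul y h
  · intro h; by_contra h2; obtain ⟨y, hy⟩ := not_od h2; exact h ⟨y, hy⟩

theorem sq_dvd {a b : GaussianInt} {n : ℕ} (hn : n ≠ 0) (h : a^n ∣ b^n) : a ∣ b := by
  exact (IsIntegrallyClosed.pow_dvd_pow_iff hn).1 h

theorem fourth {a b y : GaussianInt} (hab : IsCoprime a b) (h : a * b = y^4) (hy : y ≠ 0) :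
    ∃ u v k l, u * v = 1 ∧ a = u * k^4 ∧ b = v * l^4 ∧ y = k * l := by
  obtain ⟨d, u, hu⟩ := exists_associated_pow_of_associated_pow_mul hab (k := 4) (c := y) (h ▸ Associated.refl _)
  obtain ⟨d', v, hv⟩ := exists_associated_pow_of_associated_pow_mul hab.symm (k := 4) (c := y) ((mul_comm b a).trans h ▸ Associated.refl _)
  have h1 : (d*d')^4 * (u*v) = y^4 := by rw [← h, ← hu, ← hv]; ring
  have h2 : d * d' ∣ y := sq_dvd (n := 4) (by norm_num) ⟨_, h1.symm⟩
  obtain ⟨o, ho⟩ := h2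
  have hne : (d*d')^4 ≠ 0 := by
    intro h0; rw [h0, zero_mul] at h1; exact hy (by simpa using h1.symm)
  have h3 : (u:GaussianInt)*v = o^4 := by
    apply mul_left_cancel₀ hne
    rw [h1, ho]; ring
  have ho' : IsUnit o := by
    have : IsUnit (o^4) := by rw [← h3]; exact (u*v).isUnit
    exact (isUnit_pow_iff (by norm_num)).1 this
  have h4 := unit_four ho'
  refine ⟨u, v, d, d'*o, by rw [h3, h4], by rw [← hu]; ring, ?_, by rw [ho]; ring⟩
  rw [← hv, mul_pow, h4]; ring

theorem strip {a b y p : GaussianInt} (hab : IsCoprime a b) (hp : Prime p) (n : ℕ) (h : a * b = p^n*y) :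
    (∃ a', a = p^n*a' ∧ a' * b = y) ∨ (∃ b', b = p^n*b' ∧ a * b' = y) := by
  have hp0 : p^n ≠ 0 := pow_ne_zero _ hp.ne_zero
  by_cases hb : p ∣ b
  · right
    have ha : ¬ p ∣ a := fun ha => hp.not_isUnit (hab.isUnit_of_dvd' ha hb)
    obtain ⟨b', rfl⟩ := Prime.pow_dvd_of_dvd_mul_left hp n ha ⟨y, h⟩
    refine ⟨b', rfl, mul_left_cancel₀ hp0 ?_⟩
    rw [← h]; ring
  · left
    obtain ⟨b', rfl⟩ := Prime.pow_dvd_of_dvd_mul_right hp n hb ⟨y, h⟩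
    refine ⟨b', rfl, mul_left_cancel₀ hp0 ?_⟩
    rw [← h]; ring

theorem coprime_of {x y : GaussianInt} (h0 : y ≠ 0) (h : ∀ z, Prime z → z ∣ x → z ∣ y → False) : IsCoprime x y :=
  isCoprime_of_prime_dvd (fun h' => h0 h'.2) (fun z hz h1 h2 => h z hz h1 h2)

/-- reduction modulo `c = 1 - 4i` -/
theorem mod_c_nonres {Y k t : GaussianInt} (n : GaussianInt) (hn : n = 1 + 2*gi ∨ n = -(1+2*gi) ∨ n = 4*(1+2*gi))
    (h : Y^2 = (1-4*gi) * t + n * k^4) : (1-4*gi) ∣ Y := by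
  let f : GaussianInt →+* ZMod 17 := Zsqrtd.lift ⟨13, by decide⟩
  have hf : ∀ z : GaussianInt, f z = (z.re : ZMod 17) + z.im * 13 := fun z => by
    simp [f, Zsqrtd.lift]
  have hgi : f gi = 13 := by rw [hf]; simp
  have h1 := congrArg f h
  have h2 : f Y = 0 := by
    rcases hn with rfl | rfl | rfl <;>
    simp only [map_pow, map_add, map_sub, map_mul, map_one, map_neg, hgi, map_ofNat] at h1 <;>
    generalize f Y = a at * <;> generalize f k = b at * <;> generalize f t = d at * <;>
    rw [show (1 - 4*13 : ZMod 17) = 0 by decide, zero_mul, zero_add] at h1 <;>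
    clear h hf <;> revert a b <;> decide
  rw [hf] at h2
  have h3 : ((Y.re + Y.im * 13 : ℤ) : ZMod 17) = 0 := by push_cast; exact h2
  rw [ZMod.intCast_zmod_eq_zero_iff_dvd] at h3
  obtain ⟨t, ht⟩ := h3
  push_cast at ht
  refine ⟨⟨t - Y.im, 4*t-3*Y.im⟩, ?_⟩
  rw [Zsqrtd.ext_iff]; simp
  omega

theorem od_sq_par {z : GaussianInt} (h : od z) : (z^2).re % 2 = 1 ∧ (z^2).im % 4 = 0 := by
  have := od_sq_mod h
  omega

theorem sq_mul_mod4 {X Y : GaussianInt} (hX : od X) (hY : od Y) :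
    (((X^2).re - (Y^2).re) % 4 = 0 ∧ ((X*Y)^2).re % 4 = 1) ∨
    (((X^2).re - (Y^2).re) % 4 = 2 ∧ ((X*Y)^2).re % 4 = 3) := by
  have h1 := od_sq_mod hX
  have h2 := od_sq_mod hY
  rw [mul_pow]
  generalize X^2 = a at *
  generalize Y^2 = b at *
  obtain ⟨p, q, hp, hq⟩ : ∃ p q : ℤ, (a.re = 1 + 4*p ∨ a.re = -1 + 4*p) ∧ a.im = 4*q := by
    rcases h1 with h1 | h1 | h1 | h1
    · exact ⟨(a.re-1)/4, a.im/4, by omega, by omega⟩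
    · exact ⟨(a.re+1)/4, a.im/4, by omega, by omega⟩
    · exact ⟨(a.re+1)/4, a.im/4, by omega, by omega⟩
    · exact ⟨(a.re-1)/4, a.im/4, by omega, by omega⟩
  obtain ⟨r, s, hr, hs⟩ : ∃ p q : ℤ, (b.re = 1 + 4*p ∨ b.re = -1 + 4*p) ∧ b.im = 4*q := by
    rcases h2 with h1 | h1 | h1 | h1
    · exact ⟨(b.re-1)/4, b.im/4, by omega, by omega⟩
    · exact ⟨(b.re+1)/4, b.im/4, by omega, by omega⟩
    · exact ⟨(b.re+1)/4, b.im/4, by omega, by omega⟩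
    · exact ⟨(b.re-1)/4, b.im/4, by omega, by omega⟩
  rw [Zsqrtd.re_mul, hq, hs]
  rcases hp with hp | hp <;> rcases hr with hr | hr <;> rw [hp, hr]
  · left; ring_nf; omega
  · right; ring_nf; omega
  · right; ring_nf; omega
  · left; ring_nf; omega

theorem unit_pair {u v : GaussianInt} (h : u * v = 1) :
    (u = 1 ∧ v = 1) ∨ (u = -1 ∧ v = -1) ∨ (u = gi ∧ v = -gi) ∨ (u = -gi ∧ v = gi) := by
  have hg := gi_sq
  have hu : IsUnit u := .of_mul_eq_one _ h
  rcases unit_cases hu with rfl | rfl | rfl | rfl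
  · left; simpa using h
  · right; left; refine ⟨rfl, by grind⟩
  · right; right; left; refine ⟨rfl, by linear_combination (-gi) * h + v * hg⟩
  · right; right; right; refine ⟨rfl, by linear_combination gi * h + v * hg⟩

theorem prime_sq_dvd {p q y : GaussianInt} (hp : Prime p) (hq : Prime q) (h : p^2 ∣ q*y) : p ∣ y := by
  rcases hp.dvd_or_dvd ((dvd_pow_self p two_ne_zero).trans h) with h1 | h1
  · obtain ⟨t, rfl⟩ := h1
    have ht : IsUnit t := (hq.irreducible.isUnit_or_isUnit rfl).resolve_left hp.not_isUnit
    rw [pow_two, mul_assoc, mul_dvd_mul_iff_left hp.ne_zero] at h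
    exact (ht.dvd_mul_left).1 h
  · exact h1

theorem prime_dvd_symm {p q : GaussianInt} (hp : Prime p) (hq : Prime q) (h : p ∣ q) : q ∣ p :=
  ((hp.dvd_prime_iff_associated hq).1 h).symm.dvd

theorem od_dvd {p q : GaussianInt} (h : p ∣ q) (hq : od q) : od p := by
  obtain ⟨t, rfl⟩ := h; exact ((od_mul _ _).1 hq).1

theorem od_dvd_two {p x : GaussianInt} (hp : Prime p) (ho : od p) (h : p ∣ 2 * x) : p ∣ x := by
  rcases hp.dvd_or_dvd h with h | h
  · exfalso
    have h2 : (2 : GaussianInt) = (1+gi)^2 * (-gi) := by decide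
    rw [h2] at h
    rcases hp.dvd_or_dvd h with h | h
    · exact (od_iff p).1 ho (prime_dvd_symm hp prime_two (hp.dvd_of_dvd_pow h))
    · exact hp.not_isUnit (isUnit_of_dvd_unit h ⟨⟨-gi, gi, by decide, by decide⟩, rfl⟩)
  · exact h

theorem Z2_aux {k X Y t b : GaussianInt} (hX : od X) (hY : od Y) (hk : od k)
    (h : 4*k^2 = (1+4*gi)*X^4+(14+12*gi)*X^2*Y^2+(1-4*gi)^2*Y^4)
    (ht : 2*t = (1-4*gi)*Y^2 + (2*gi-1)*X^2) (hc : IsCoprime (t+k) (t-k))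
    (hb : t - k = (1+2*gi)*b) (hab : (t+k)*b = -X^4) : False := by
  have hc' : IsCoprime (t+k) (-b) := by
    rw [hb] at hc; exact (hc.of_mul_right_right).neg_right
  obtain ⟨u, v, p, q, huv, h1, h2, h3⟩ := fourth hc' (y := X) (by linear_combination -hab) (od_ne hX)
  have hX' := hX
  rw [h3, od_mul] at hX'
  have e1 := od_four_mod hX'.1
  have e2 := od_four_mod hX'.2
  have e3 := od_sq_mod hX
  have e4 := od_sq_mod hY
  have e5 := od_sq_par hk
  have e6 := sq_mul_mod4 hX hY
  have e7 := od_sq_par ((od_mul _ _).2 ⟨hX, hY⟩)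
  have e8 := od_four_mod hX
  have e9 := od_four_mod hY
  have m1 : (1-4*gi)*Y^2 + (2*gi-1)*X^2 = u*p^4 - v*((1+2*gi)*q^4) := by
    rw [← ht]; linear_combination h1 + hb - (1+2*gi)*h2
  have m2 : 4*k^2 = (1+4*gi)*X^4+(14+12*gi)*(X*Y)^2+(-15-8*gi)*Y^4 := by
    rw [h]; linear_combination 16*Y^4*gi_sq
  clear h3 h1 h2 hab h ht hc hc' hb hX' hX hY hk
  generalize p^4 = p4 at *
  generalize q^4 = q4 at *
  generalize X^4 = x4 at *
  generalize Y^4 = y4 at *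
  generalize X^2 = x2 at *
  generalize Y^2 = y2 at *
  generalize (X*Y)^2 = xy at *
  generalize k^2 = k2 at *
  have a1 := congrArg Zsqrtd.re m2
  simp at a1
  have f : xy.re % 4 = 3 := by omega
  replace e6 : (x2.re - y2.re) % 4 = 2 := by omega
  clear a1 e5 e7 e8 e9 m2
  have a2 := congrArg Zsqrtd.re m1
  have a3 := congrArg Zsqrtd.im m1
  rcases unit_pair huv with ⟨rfl, rfl⟩ | ⟨rfl, rfl⟩ | ⟨rfl, rfl⟩ | ⟨rfl, rfl⟩ <;>
  simp at a2 a3 <;> omega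

theorem lemma_Z2 {k X Y : GaussianInt} (hX : od X) (hY : od Y) (hk : od k) (hXY : IsCoprime X Y)
    (hcX : ¬ (1-4*gi) ∣ X)
    (h : 4*k^2 = (1+4*gi)*X^4+(14+12*gi)*X^2*Y^2+(1-4*gi)^2*Y^4) : False := by
  have hg := gi_sq
  have e3 := od_sq_mod hX
  have e4 := od_sq_mod hY
  obtain ⟨t, ht⟩ : ∃ t, 2*t = (1-4*gi)*Y^2 + (2*gi-1)*X^2 := by
    generalize X^2 = x2 at *
    generalize Y^2 = y2 at *
    refine ⟨⟨((1-4*gi)*y2 + (2*gi-1)*x2).re/2, ((1-4*gi)*y2 + (2*gi-1)*x2).im/2⟩, ?_⟩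
    rw [Zsqrtd.ext_iff]; simp; omega
  have hprod : (t+k)*(t-k) = (1+2*gi)*(-X^4) := by
    have h4 : (4:GaussianInt) ≠ 0 := by decide
    apply mul_left_cancel₀ h4
    grind
  have hco : IsCoprime (t+k) (t-k) := by
    apply coprime_of
    · intro h0; rw [h0, mul_zero] at hprod
      rcases mul_eq_zero.1 hprod.symm with h | h
      · revert h; decide
      · exact od_ne hX (by simpa using h)
    · intro p hp h1 h2
      have hpX : p ∣ X := by
        have : p^2 ∣ (1+2*gi)*(-X^4) := by rw [← hprod, pow_two]; exact mul_dvd_mul h1 h2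
        have := prime_sq_dvd hp prime_q this
        exact hp.dvd_of_dvd_pow ((dvd_neg).1 this)
      have hpo := od_dvd hpX hX
      have hpt : p ∣ 2*t := by
        have := dvd_add h1 h2
        rwa [show t+k+(t-k) = 2*t by ring] at this
      rw [ht] at hpt
      have hpY : p ∣ (1-4*gi)*Y^2 := (dvd_add_left (((hpX.trans (dvd_pow_self X two_ne_zero))).mul_left _)).1 hpt
      rcases hp.dvd_or_dvd hpY with h | h
      · exact hcX ((prime_dvd_symm hp prime_c h).trans hpX)
      · exact hp.not_isUnit (hXY.isUnit_of_dvd' hpX (hp.dvd_of_dvd_pow h))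
  rcases strip hco prime_q 1 (by rw [hprod, pow_one]) with ⟨b, hb, hb2⟩ | ⟨b, hb, hb2⟩
  · exact Z2_aux (k := -k) (b := b) hX hY ((od_neg k).2 hk) (by rw [neg_sq]; exact h) ht
      (by simpa [sub_eq_add_neg] using hco.symm) (by simpa using hb) (by rw [← hb2]; ring)
  · exact Z2_aux hX hY hk h ht hco (by simpa using hb) hb2

theorem fourth' {a b y : GaussianInt} (hab : IsCoprime a b) (h : a * b = y^4) (hy : y ≠ 0) :
    ∃ u v k l, u * v = 1 ∧ a = u * k^4 ∧ b = v * l^4 ∧ y = k * l ∧ IsCoprime k l := by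
  obtain ⟨u, v, k, l, h1, h2, h3, h4⟩ := fourth hab h hy
  refine ⟨u, v, k, l, h1, h2, h3, h4, ?_⟩
  refine IsCoprime.of_isCoprime_of_dvd_left (IsCoprime.of_isCoprime_of_dvd_right hab ?_) ?_
  · rw [h3]; exact (dvd_pow_self l four_ne_zero).mul_left _
  · rw [h2]; exact (dvd_pow_self k four_ne_zero).mul_left _

theorem od_pow (x : GaussianInt) (n : ℕ) (h : od x) : od (x^n) := by
  induction n with
  | zero => rw [pow_zero]; simp [od]
  | succ n ih => rw [pow_succ, od_mul]; exact ⟨ih, h⟩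

theorem od_two_mul {x : GaussianInt} (y : GaussianInt) : od (x + 2*y) ↔ od x := by
  unfold od; simp; omega

theorem coprime_c {a b : GaussianInt} (h : IsCoprime a b) (h1 : (1-4*gi) ∣ a) (h2 : (1-4*gi) ∣ b) : False :=
  prime_c.not_isUnit (h.isUnit_of_dvd' h1 h2)

theorem Zstep2_aux {Y k h b : GaussianInt} (hY : od Y) (hk : od k) (hh : od h)
    (hc : IsCoprime (2*k^2 - (7+6*gi)*h^2 - 2*Y) (2*k^2 - (7+6*gi)*h^2 + 2*Y))
    (hb : 2*k^2 - (7+6*gi)*h^2 + 2*Y = (1+4*gi)*b)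
    (hab : (2*k^2 - (7+6*gi)*h^2 - 2*Y)*b = (1-4*gi)^2*h^4) :
    ∃ f g κ : GaussianInt, (κ = k ∨ κ = gi * k) ∧ h.norm = f.norm * g.norm ∧ od f ∧ od g ∧ IsCoprime g f ∧ ¬ (1-4*gi) ∣ f ∧
      (2*κ)^2 = f^4 + (14+12*gi)*g^2*f^2 + (17-68*gi)*g^4 := by
  have hg := gi_sq
  have hc' : IsCoprime (2*k^2 - (7+6*gi)*h^2 - 2*Y) b := by
    rw [hb] at hc; exact hc.of_mul_right_right
  have ek := od_sq_par hk
  have eh := od_sq_par hh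
  rcases strip hc' prime_c 2 hab with ⟨a', h1, h2⟩ | ⟨b', h1, h2⟩
  · exfalso
    have hc2 : IsCoprime a' b := by rw [h1] at hc'; exact hc'.of_mul_left_right
    obtain ⟨u, v, f, g, huv, i1, i2, i3, i4⟩ := fourth' hc2 h2 (od_ne hh)
    have ho := hh
    rw [i3, od_mul] at ho
    have e1 := od_four_mod ho.1
    have e2 := od_four_mod ho.2
    have m1 : 4*k^2 = u*((-15-8*gi)*f^4) + (14+12*gi)*h^2 + v*((1+4*gi)*g^4) := by grind
    have hcg : ¬ (1-4*gi) ∣ g := fun hd => coprime_c hc' (by rw [h1]; exact (dvd_pow_self _ two_ne_zero).mul_right _)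
      (by rw [i2]; exact (hd.trans (dvd_pow_self g four_ne_zero)).mul_left _)
    have a1 := congrArg Zsqrtd.re m1
    have a2 := congrArg Zsqrtd.im m1
    rcases unit_pair huv with ⟨rfl, rfl⟩ | ⟨rfl, rfl⟩ | ⟨rfl, rfl⟩ | ⟨rfl, rfl⟩
    · refine lemma_Z2 ho.2 ho.1 hk i4.symm hcg ?_
      rw [m1, i3]; linear_combination (-16)*f^4*hg
    · refine lemma_Z2 (k := gi*k) (Y := gi*f) ho.2 ((od_gi _).2 ho.1) ((od_gi _).2 hk) ?_ hcg ?_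
      · exact (isCoprime_mul_unit_left_right ⟨⟨gi, -gi, by decide, by decide⟩, rfl⟩ _ _).2 i4.symm
      · rw [i3] at m1; grind
    · exfalso
      generalize f^4 = f4 at *
      generalize g^4 = g4 at *
      generalize h^2 = h2 at *
      generalize k^2 = k2 at *
      simp at a1 a2; omega
    · exfalso
      generalize f^4 = f4 at *
      generalize g^4 = g4 at *
      generalize h^2 = h2 at *
      generalize k^2 = k2 at *
      simp at a1 a2; omega
  · have hc2 : IsCoprime (2*k^2 - (7+6*gi)*h^2 - 2*Y) b' := by rw [h1] at hc'; exact hc'.of_mul_right_right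
    obtain ⟨u, v, f, g, huv, i1, i2, i3, i4⟩ := fourth' hc2 h2 (od_ne hh)
    have ho := hh
    rw [i3, od_mul] at ho
    have e1 := od_four_mod ho.1
    have e2 := od_four_mod ho.2
    have m1 : 4*k^2 = u*f^4 + (14+12*gi)*h^2 + v*((17-68*gi)*g^4) := by grind
    have hcf : ¬ (1-4*gi) ∣ f := fun hd => coprime_c hc'
      (by rw [i1]; exact (hd.trans (dvd_pow_self f four_ne_zero)).mul_left _) 
      (by rw [h1]; exact (dvd_pow_self _ two_ne_zero).mul_right _)
    have a1 := congrArg Zsqrtd.re m1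
    have a2 := congrArg Zsqrtd.im m1
    rcases unit_pair huv with ⟨rfl, rfl⟩ | ⟨rfl, rfl⟩ | ⟨rfl, rfl⟩ | ⟨rfl, rfl⟩
    · refine ⟨f, g, k, Or.inl rfl, by rw [i3, Zsqrtd.norm_mul], ho.1, ho.2, i4.symm, hcf, ?_⟩
      rw [i3] at m1; linear_combination m1
    · have hu : IsUnit gi := ⟨⟨gi, -gi, by decide, by decide⟩, rfl⟩
      refine ⟨gi*f, g, gi*k, Or.inr rfl, ?_, (od_gi _).2 ho.1, ho.2, ?_, ?_, ?_⟩
      · rw [i3, Zsqrtd.norm_mul, Zsqrtd.norm_mul, show gi.norm = 1 by decide, one_mul]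
      · exact (isCoprime_mul_unit_left_right hu _ _).2 i4.symm
      · rw [hu.dvd_mul_left]; exact hcf
      · rw [i3] at m1; grind
    · exfalso
      generalize f^4 = f4 at *
      generalize g^4 = g4 at *
      generalize h^2 = h2 at *
      generalize k^2 = k2 at *
      simp at a1 a2; omega
    · exfalso
      generalize f^4 = f4 at *
      generalize g^4 = g4 at *
      generalize h^2 = h2 at *
      generalize k^2 = k2 at *
      simp at a1 a2; omega

theorem Zstep2 {Y k h : GaussianInt} (hY : od Y) (hk : od k) (hh : od h) (hkh : IsCoprime k h)
    (hcY : ¬ (1-4*gi) ∣ Y)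
    (heq : Y^2 = k^4 - (1+2*gi)*(1-4*gi)^2*h^4 - (7+6*gi)*k^2*h^2) :
    ∃ f g κ : GaussianInt, (κ = k ∨ κ = gi * k) ∧ h.norm = f.norm * g.norm ∧ od f ∧ od g ∧
      IsCoprime g f ∧ ¬ (1-4*gi) ∣ f ∧
      (2*κ)^2 = f^4 + (14+12*gi)*g^2*f^2 + (17-68*gi)*g^4 := by
  have hg := gi_sq
  have hprod : (2*k^2 - (7+6*gi)*h^2 - 2*Y) * (2*k^2 - (7+6*gi)*h^2 + 2*Y)
      = (1+4*gi) * ((1-4*gi)^2*h^4) := by grind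
  have eh := od_sq_par hh
  have hco : IsCoprime (2*k^2 - (7+6*gi)*h^2 - 2*Y) (2*k^2 - (7+6*gi)*h^2 + 2*Y) := by
    have hodd : od (2*k^2 - (7+6*gi)*h^2 + 2*Y) := by
      rw [od_two_mul]
      generalize h^2 = h2 at *
      unfold od; simp; omega
    apply coprime_of (od_ne hodd)
    intro p hp h1 h2
    have hpo := od_dvd h2 hodd
    have hpL : p ∣ 2*k^2 - (7+6*gi)*h^2 := by
      apply od_dvd_two hp hpo
      have := dvd_add h1 h2
      ring_nf at this ⊢; exact this
    have hpY : p ∣ Y := by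
      apply od_dvd_two hp hpo; apply od_dvd_two hp hpo
      have := dvd_sub h2 h1
      ring_nf at this ⊢; exact this
    have h3 : p ∣ (1-4*gi)^2*h^4 := by
      apply prime_sq_dvd hp prime_e
      rw [← hprod, pow_two]; exact mul_dvd_mul h1 h2
    rcases hp.dvd_or_dvd h3 with h4 | h4
    · exact hcY ((prime_dvd_symm hp prime_c (hp.dvd_of_dvd_pow h4)).trans hpY)
    · have h5 := hp.dvd_of_dvd_pow h4
      have h6 : p ∣ 2*k^2 := (dvd_sub_left ((h5.trans (dvd_pow_self h two_ne_zero)).mul_left _)).1 hpL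
      exact hp.not_isUnit (hkh.isUnit_of_dvd' (hp.dvd_of_dvd_pow (od_dvd_two hp hpo h6)) h5)
  rcases strip hco prime_e 1 (by rw [hprod, pow_one]) with ⟨b, hb, hb2⟩ | ⟨b, hb, hb2⟩
  · refine Zstep2_aux (Y := -Y) (b := b) ((od_neg Y).2 hY) hk hh ?_ ?_ ?_
    · convert hco.symm using 1 <;> ring
    · rw [← pow_one (1+4*gi), ← hb]; ring
    · rw [← hb2]; ring
  · exact Zstep2_aux hY hk hh hco (by simpa using hb) hb2

theorem isUnit_gi : IsUnit gi := ⟨⟨gi, -gi, by decide, by decide⟩, rfl⟩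

theorem norm_gi_mul (z : GaussianInt) : (gi*z).norm = z.norm := by
  rw [Zsqrtd.norm_mul, show gi.norm = 1 by decide, one_mul]

set_option maxHeartbeats 2000000 in
theorem Zstep1_aux {t w X Y b : GaussianInt} (hX : od X) (hY : od Y) (hcY : ¬ (1-4*gi) ∣ Y)
    (ht : 2*t = Y^2 + (7+6*gi)*X^2) (hco : IsCoprime (t+w) (t-w))
    (hb : t - w = (1+2*gi)*b) (hab : (t+w)*b = (1-4*gi)^2*(-X^4)) :
    ∃ k h Y' : GaussianInt, X.norm = k.norm * h.norm ∧ od k ∧ od h ∧ od Y' ∧ IsCoprime k h ∧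
      ¬ (1-4*gi) ∣ Y' ∧ Y'^2 = k^4 - (1+2*gi)*(1-4*gi)^2*h^4 - (7+6*gi)*k^2*h^2 := by
  have hg := gi_sq
  have hc' : IsCoprime (t+w) b := by
    rw [hb] at hco; exact hco.of_mul_right_right
  have eX := od_sq_mod hX
  have eY := od_sq_mod hY
  rcases strip hc' prime_c 2 hab with ⟨a', h1, h2⟩ | ⟨b', h1, h2⟩
  · exfalso
    have hc2 : IsCoprime a' (-b) := by rw [h1] at hc'; exact hc'.of_mul_left_right.neg_right
    obtain ⟨u, v, k, h, huv, i1, i2, i3, i4⟩ := fourth' hc2 (y := X) (by linear_combination -h2) (od_ne hX)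
    have ho := hX
    rw [i3, od_mul] at ho
    have e1 := od_four_mod ho.1
    have e2 := od_four_mod ho.2
    have m1 : Y^2 = u*((-15-8*gi)*k^4) - v*((1+2*gi)*h^4) - (7+6*gi)*X^2 := by grind
    have a1 := congrArg Zsqrtd.re m1
    have a2 := congrArg Zsqrtd.im m1
    have huu : u = 1 ∧ v = 1 ∨ u = -1 ∧ v = -1 := by
      rcases unit_pair huv with h | h | ⟨rfl, rfl⟩ | ⟨rfl, rfl⟩
      · exact Or.inl h
      · exact Or.inr h
      all_goals
        exfalso
        generalize k^4 = k4 at *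
        generalize h^4 = h4 at *
        generalize X^2 = x2 at *
        generalize Y^2 = y2 at *
        simp at a1 a2; omega
    apply hcY
    rcases huu with ⟨rfl, rfl⟩ | ⟨rfl, rfl⟩
    · refine mod_c_nonres (k := h) (t := (1-4*gi)*k^4 - (2*gi-1)*X^2) (-(1+2*gi)) (by simp) ?_
      rw [m1]; grind
    · refine mod_c_nonres (k := h) (t := -(1-4*gi)*k^4 - (2*gi-1)*X^2) ((1+2*gi)) (by simp) ?_
      rw [m1]; grind
  · have hc2 : IsCoprime (t+w) (-b') := by rw [h1] at hc'; exact hc'.of_mul_right_right.neg_right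
    obtain ⟨u, v, k, h, huv, i1, i2, i3, i4⟩ := fourth' hc2 (y := X) (by linear_combination -h2) (od_ne hX)
    have ho := hX
    rw [i3, od_mul] at ho
    have e1 := od_four_mod ho.1
    have e2 := od_four_mod ho.2
    have m1 : Y^2 = u*k^4 - v*((1-38*gi)*h^4) - (7+6*gi)*X^2 := by grind
    have a1 := congrArg Zsqrtd.re m1
    have a2 := congrArg Zsqrtd.im m1
    have huu : u = 1 ∧ v = 1 ∨ u = -1 ∧ v = -1 := by
      rcases unit_pair huv with h | h | ⟨rfl, rfl⟩ | ⟨rfl, rfl⟩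
      · exact Or.inl h
      · exact Or.inr h
      all_goals
        exfalso
        generalize k^4 = k4 at *
        generalize h^4 = h4 at *
        generalize X^2 = x2 at *
        generalize Y^2 = y2 at *
        simp at a1 a2; omega
    rcases huu with ⟨rfl, rfl⟩ | ⟨rfl, rfl⟩
    · refine ⟨k, h, Y, by rw [i3, Zsqrtd.norm_mul], ho.1, ho.2, hY, i4, hcY, ?_⟩
      rw [i3] at m1; grind
    · refine ⟨gi*k, h, gi*Y, by rw [i3, Zsqrtd.norm_mul, norm_gi_mul], (od_gi _).2 ho.1, ho.2, (od_gi _).2 hY, ?_, ?_, ?_⟩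
      · exact (isCoprime_mul_unit_left_left isUnit_gi _ _).2 i4
      · rw [isUnit_gi.dvd_mul_left]; exact hcY
      · rw [i3] at m1; grind

theorem Zstep1 {W X Y : GaussianInt} (hX : od X) (hY : od Y) (hcY : ¬ (1-4*gi) ∣ Y) (hXY : IsCoprime X Y)
    (heq : W^2 = Y^4 + (14+12*gi)*X^2*Y^2 + (17-68*gi)*X^4) :
    ∃ k h Y' : GaussianInt, X.norm = k.norm * h.norm ∧ od k ∧ od h ∧ od Y' ∧ IsCoprime k h ∧
      ¬ (1-4*gi) ∣ Y' ∧ Y'^2 = k^4 - (1+2*gi)*(1-4*gi)^2*h^4 - (7+6*gi)*k^2*h^2 := by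
  have hg := gi_sq
  have eX := od_sq_par hX
  have eY := od_sq_par hY
  have e1 := od_four_mod hX
  have e2 := od_four_mod hY
  have e3 := od_sq_par ((od_mul _ _).2 ⟨hX, hY⟩)
  obtain ⟨w, rfl⟩ : (2:GaussianInt) ∣ W := by
    apply sq_dvd two_ne_zero
    have : W^2 = Y^4 + (14+12*gi)*(X*Y)^2 + (17-68*gi)*X^4 := by rw [heq]; ring
    rw [this]
    generalize X^4 = x4 at *
    generalize Y^4 = y4 at *
    generalize (X*Y)^2 = xy at *
    refine ⟨⟨(y4 + (14+12*gi)*xy + (17-68*gi)*x4).re/4, (y4 + (14+12*gi)*xy + (17-68*gi)*x4).im/4⟩, ?_⟩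
    rw [show (2:GaussianInt)^2 = 4 by norm_num, Zsqrtd.ext_iff]; simp; omega
  obtain ⟨t, ht⟩ : ∃ t, 2*t = Y^2 + (7+6*gi)*X^2 := by
    generalize X^2 = x2 at *
    generalize Y^2 = y2 at *
    refine ⟨⟨(y2 + (7+6*gi)*x2).re/2, (y2 + (7+6*gi)*x2).im/2⟩, ?_⟩
    rw [Zsqrtd.ext_iff]; simp; omega
  have hprod : (t+w)*(t-w) = (1+2*gi)*((1-4*gi)^2*(-X^4)) := by
    have h4 : (4:GaussianInt) ≠ 0 := by decide
    apply mul_left_cancel₀ h4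
    grind
  have hodd : od ((t+w)*(t-w)) := by
    rw [hprod, od_mul, od_mul]
    refine ⟨by simp [od], od_pow _ _ (by simp [od]), (od_neg _).2 (od_pow _ _ hX)⟩
  have hco : IsCoprime (t+w) (t-w) := by
    apply coprime_of
    · exact od_ne ((od_mul _ _).1 hodd).2
    · intro p hp h1 h2
      have hpo := od_dvd h1 ((od_mul _ _).1 hodd).1
      have h3 : p ∣ (1-4*gi)^2*(-X^4) := by
        apply prime_sq_dvd hp prime_q
        rw [← hprod, pow_two]; exact mul_dvd_mul h1 h2
      have hpt : p ∣ 2*t := by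
        have := dvd_add h1 h2
        rwa [show t+w+(t-w) = 2*t by ring] at this
      rw [ht] at hpt
      rcases hp.dvd_or_dvd h3 with h | h
      · have h5 := hp.dvd_of_dvd_pow h
        have h6 := prime_dvd_symm hp prime_c h5
        apply hcY
        have h7 : p ∣ (7+6*gi)*X^2 := by
          rw [show (7+6*gi) = (1-4*gi)*(2*gi-1) by decide]
          exact (h5.mul_right _).mul_right _
        have := hp.dvd_of_dvd_pow ((dvd_add_left h7).1 hpt)
        exact h6.trans this
      · have h5 := hp.dvd_of_dvd_pow (dvd_neg.1 h)
        have h6 : p ∣ Y^2 := (dvd_add_left ((h5.trans (dvd_pow_self X two_ne_zero)).mul_left _)).1 hpt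
        exact hp.not_isUnit (hXY.isUnit_of_dvd' h5 (hp.dvd_of_dvd_pow h6))
  rcases strip hco prime_q 1 (by rw [hprod, pow_one]) with ⟨b, hb, hb2⟩ | ⟨b, hb, hb2⟩
  · exact Zstep1_aux (w := -w) (b := b) hX hY hcY ht
      (by simpa [sub_eq_add_neg] using hco.symm) (by simpa using hb) (by rw [← hb2]; ring)
  · exact Zstep1_aux hX hY hcY ht hco (by simpa using hb) hb2

theorem norm_pos_of_od {x : GaussianInt} (h : od x) : 0 < x.norm := by
  have h0 := GaussianInt.norm_nonneg x
  have : x.norm ≠ 0 := fun h' => od_ne h ((Zsqrtd.norm_eq_zero_iff (by norm_num) x).1 h')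
  omega

theorem unit_of_norm {x : GaussianInt} (h : x.norm = 1) : IsUnit x := by
  rw [← Zsqrtd.norm_eq_one_iff, h]; rfl

theorem Z_cop (n : ℕ) : ∀ {W X Y : GaussianInt}, X.norm ≤ n → od X → od Y → ¬ (1-4*gi) ∣ Y → IsCoprime X Y →
    W^2 = Y^4 + (14+12*gi)*X^2*Y^2 + (17-68*gi)*X^4 → False := by
  induction n with
  | zero =>
    intro W X Y hn hX
    have := norm_pos_of_od hX
    simp at hn; omega
  | succ n ih =>
    intro W X Y hn hX hY hcY hXY heq
    have hg := gi_sq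
    obtain ⟨k, h, Y', j1, j2, j3, j4, j5, j6, j7⟩ := Zstep1 hX hY hcY hXY heq
    obtain ⟨f, g, κ, l1, l2, l3, l4, l5, l6, l7⟩ := Zstep2 j4 j2 j3 j5 j6 j7
    have pk := norm_pos_of_od j2
    have pf := norm_pos_of_od l3
    have pg := norm_pos_of_od l4
    have hκ : κ.norm = k.norm := by
      rcases l1 with rfl | rfl
      · rfl
      · exact norm_gi_mul _
    by_cases hle : g.norm ≤ n
    · exact ih hle l4 l3 l6 l5 l7
    · push Not at hle
      rw [l2] at j1
      push_cast at hn
      have hkf : k.norm * f.norm = 1 := by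
        have : (k.norm * f.norm) * g.norm ≤ g.norm := by nlinarith
        have : 0 < k.norm * f.norm := by positivity
        nlinarith
      have hk1 : κ.norm = 1 := by rw [hκ]; nlinarith
      have hf1 : f.norm = 1 := by nlinarith
      have hf4 := unit_four (unit_of_norm hf1)
      have hd : (1-4*gi) ∣ (2*κ)^2 - 1 := by
        refine ⟨(4+2*gi)*gi*g^2*f^2 + 17*g^4, ?_⟩
        rw [l7]; grind
      obtain ⟨t, ht⟩ := hd
      have a1 := congrArg Zsqrtd.re ht
      have a2 := congrArg Zsqrtd.im ht
      rcases unit_cases (unit_of_norm hk1) with rfl | rfl | rfl | rfl <;> simp [pow_two] at a1 a2 <;> omega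

theorem exists_cop {X Y : GaussianInt} (hY : Y ≠ 0) :
    ∃ g X' Y', X = g * X' ∧ Y = g * Y' ∧ IsCoprime X' Y' := by
  have h0 : EuclideanDomain.gcd X Y ≠ 0 := by
    intro h; exact hY (EuclideanDomain.gcd_eq_zero_iff.1 h).2
  obtain ⟨X', h1⟩ := EuclideanDomain.gcd_dvd_left X Y
  obtain ⟨Y', h2⟩ := EuclideanDomain.gcd_dvd_right X Y
  refine ⟨_, X', Y', h1, h2, ?_⟩
  refine ⟨EuclideanDomain.gcdA X Y, EuclideanDomain.gcdB X Y, ?_⟩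
  have h3 := EuclideanDomain.gcd_eq_gcd_ab X Y
  apply mul_left_cancel₀ h0
  generalize EuclideanDomain.gcdA X Y = a at *
  generalize EuclideanDomain.gcdB X Y = b at *
  generalize EuclideanDomain.gcd X Y = d at *
  linear_combination (-1)*h3 - a*h1 - b*h2

theorem jred {W X Y : GaussianInt} (hY : Y ≠ 0)
    (heq : W^2 = Y^4 + (14+12*gi)*X^2*Y^2 + (17-68*gi)*X^4) :
    ∃ g X' Y' W', X = g * X' ∧ Y = g * Y' ∧ IsCoprime X' Y' ∧
      W'^2 = Y'^4 + (14+12*gi)*X'^2*Y'^2 + (17-68*gi)*X'^4 := by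
  obtain ⟨g, X', Y', rfl, rfl, hc⟩ := exists_cop (X := X) hY
  have hg0 : g ≠ 0 := left_ne_zero_of_mul hY
  obtain ⟨W', rfl⟩ : g^2 ∣ W := by
    apply sq_dvd two_ne_zero
    exact ⟨Y'^4 + (14+12*gi)*X'^2*Y'^2 + (17-68*gi)*X'^4, by rw [heq]; ring⟩
  refine ⟨g, X', Y', W', rfl, rfl, hc, ?_⟩
  apply mul_left_cancel₀ (pow_ne_zero 4 hg0)
  linear_combination heq

theorem lemma_Z {W X Y : GaussianInt} (hX : od X) (hY : od Y) (hcY : ¬ (1-4*gi) ∣ Y)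
    (heq : W^2 = Y^4 + (14+12*gi)*X^2*Y^2 + (17-68*gi)*X^4) : False := by
  obtain ⟨g, X', Y', W', rfl, rfl, hc, h⟩ := jred (od_ne hY) heq
  rw [od_mul] at hX hY
  refine Z_cop X'.norm.toNat (by omega) hX.2 hY.2 (fun h => hcY (h.mul_left _)) hc h

theorem shift {w X Y : GaussianInt} (h : w^2 = (1+4*gi)*X^4 + (14+12*gi)*X^2*Y^2 + (1-4*gi)^2*Y^4) :
    ∃ W3, W3^2 = ((1-4*gi)^2*Y^2 - (1+4*gi)*X^2)^4
      + (14+12*gi)*((2+2*gi)*X*Y + w)^2*((1-4*gi)^2*Y^2 - (1+4*gi)*X^2)^2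
      + (17-68*gi)*((2+2*gi)*X*Y + w)^4 := by
  have := gi_sq
  refine ⟨((1-4*gi)^2*Y^2 + (1+4*gi)*X^2)*((2+2*gi)*w + (14+12*gi)*X*Y) + 2*(17-68*gi)*X*Y*(X^2+Y^2), ?_⟩
  grind

theorem lemma_B {w X Y : GaussianInt} (hX : ¬ od X) (hY : od Y) (hcX : ¬ (1-4*gi) ∣ X)
    (h : w^2 = (1+4*gi)*X^4 + (14+12*gi)*X^2*Y^2 + (1-4*gi)^2*Y^4) : False := by
  obtain ⟨W3, h3⟩ := shift h
  obtain ⟨x, rfl⟩ := not_od hX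
  refine lemma_Z ?_ ?_ ?_ h3
  · have hw : od (w^2) := by
      rw [h]
      have e := od_four_mod hY
      rw [show (1+4*gi)*((1+gi)*x)^4 + (14+12*gi)*((1+gi)*x)^2*Y^2 + (1-4*gi)^2*Y^4 =
        (1+gi)*((1+4*gi)*(1+gi)^3*x^4 + (14+12*gi)*(1+gi)*x^2*Y^2) + (-15-8*gi)*Y^4 by
          linear_combination 16*Y^4*gi_sq]
      generalize ((1+4*gi)*(1+gi)^3*x^4 + (14+12*gi)*(1+gi)*x^2*Y^2) = r at *
      generalize Y^4 = y4 at *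
      unfold od; simp; omega
    rw [pow_two, od_mul] at hw
    rw [show (2+2*gi)*((1+gi)*x)*Y + w = w + 2*((1+gi)*(1+gi)*x*Y) by ring, od_two_mul]
    exact hw.1
  · have e := od_sq_par hY
    rw [show (1-4*gi)^2*Y^2 - (1+4*gi)*((1+gi)*x)^2 = (-15-8*gi)*Y^2 - (1+gi)*((1+4*gi)*(1+gi)*x^2) by
      linear_combination 16*Y^2*gi_sq]
    generalize ((1+4*gi)*(1+gi)*x^2) = r at *
    generalize Y^2 = y at *
    unfold od; simp; omega
  · intro hd
    have h1 : (1-4*gi) ∣ (1+4*gi)*((1+gi)*x)^2 :=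
      (dvd_sub_right (((dvd_pow_self _ two_ne_zero).mul_right _))).1 hd
    rcases prime_c.dvd_or_dvd h1 with h2 | h2
    · obtain ⟨t, ht⟩ := h2
      have a1 := congrArg Zsqrtd.re ht
      have a2 := congrArg Zsqrtd.im ht
      simp at a1 a2; omega
    · exact hcX (prime_c.dvd_of_dvd_pow h2)

theorem od_sq_re4 {z : GaussianInt} (h : od z) :
    ((z^2).re % 4 = 1 ∧ z.im % 2 = 0) ∨ ((z^2).re % 4 = 3 ∧ z.re % 2 = 0) := by
  unfold od at h
  obtain ⟨a, b⟩ := z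
  have hr : ((⟨a, b⟩ : GaussianInt)^2).re = a*a - b*b := by simp [pow_two]; ring
  rw [hr]
  have e1 := Int.mul_emod a a 4
  have e2 := Int.mul_emod b b 4
  change (a + b) % 2 = 1 at h
  have ha : a % 4 = 0 ∨ a % 4 = 1 ∨ a % 4 = 2 ∨ a % 4 = 3 := by omega
  have hb : b % 4 = 0 ∨ b % 4 = 1 ∨ b % 4 = 2 ∨ b % 4 = 3 := by omega
  change _ ∧ b % 2 = 0 ∨ _ ∧ a % 2 = 0
  rcases ha with ha | ha | ha | ha <;> rcases hb with hb | hb | hb | hb <;>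
  rw [ha] at e1 <;> rw [hb] at e2 <;> norm_num at e1 e2 <;> omega

theorem two_dvd_of {X Y : GaussianInt} (hX : od X) (hY : od Y)
    (h : ((X^2).re - (Y^2).re) % 4 = 2) : 2 ∣ X - gi*Y := by
  have e1 := od_sq_re4 hX
  have e2 := od_sq_re4 hY
  unfold od at hX hY
  refine ⟨⟨(X.re + Y.im)/2, (X.im - Y.re)/2⟩, ?_⟩
  rw [Zsqrtd.ext_iff]; simp; omega

/-- The two-adic property of J-points. -/
def PP (X Y : GaussianInt) : Prop :=
  ∃ (j : ℕ) (X' : GaussianInt), X = (1+gi)*2^j*X' ∧ od X' ∧ 2 ∣ X' - gi*Y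

theorem mod8_mul {C z : GaussianInt} (hC : C = 1 ∨ C = -15-8*gi) (h : z.re % 8 = 1 ∧ z.im % 8 = 0) :
    (C*z).re % 8 = 1 ∧ (C*z).im % 8 = 0 := by
  rcases hC with rfl | rfl <;> simp <;> omega

theorem main_caseII_mod {y x p q u v : GaussianInt} (huv : u*v = 1)
    (hp : p.re % 8 = 1 ∧ p.im % 8 = 0) (hq : q.re % 8 = 1 ∧ q.im % 8 = 0)
    (hx : x.re % 2 = 1 ∧ x.im % 4 = 0)
    (hy : (y.re % 8 = 1 ∧ y.im % 8 = 0) ∨ (y.re % 8 = 7 ∧ y.im % 8 = 0) ∨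
    (y.re % 8 = 3 ∧ y.im % 8 = 4) ∨ (y.re % 8 = 5 ∧ y.im % 8 = 4))
    (heq : y = (1+2*gi)*(u*p) + (12-14*gi)*x + 4*(v*q)) : (x.re - y.re) % 4 = 2 := by
  have a1 := congrArg Zsqrtd.re heq
  have a2 := congrArg Zsqrtd.im heq
  clear heq
  rcases unit_pair huv with ⟨rfl, rfl⟩ | ⟨rfl, rfl⟩ | ⟨rfl, rfl⟩ | ⟨rfl, rfl⟩ <;>
  simp at a1 a2 <;> omega

theorem main_caseII_mod' {y p r u v : GaussianInt} (huv : u*v = 1)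
    (hp : p.re % 8 = 1 ∧ p.im % 8 = 0) (hy : y.re % 2 = 1 ∧ y.im % 4 = 0)
    (heq : y = (1+2*gi)*(u*p) + 4*r) : False := by
  have a2 := congrArg Zsqrtd.im heq
  clear heq
  rcases unit_pair huv with ⟨rfl, rfl⟩ | ⟨rfl, rfl⟩ | ⟨rfl, rfl⟩ | ⟨rfl, rfl⟩ <;>
  simp at a2 <;> omega

theorem main_caseII {Y X k h u v κ C D : GaussianInt} (hY : od Y) (hk : od k) (hX : X = k*h)
    (huv : u*v = 1) (hκ : κ = u*k^4)
    (hC : C = 1 ∨ C = -15-8*gi) (hD : D = 1 ∨ D = -15-8*gi)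
    (heq : Y^2 = (1+2*gi)*(C*κ) + (12-14*gi)*X^2 + 4*(v*(D*h^4))) : PP ((1+gi)*X) Y := by
  have e1 := mod8_mul hC (od_four_mod hk)
  subst hκ
  by_cases hh : od h
  · have hXo : od X := by rw [hX, od_mul]; exact ⟨hk, hh⟩
    refine ⟨0, X, by ring, hXo, two_dvd_of hXo hY ?_⟩
    refine main_caseII_mod huv e1 (mod8_mul hD (od_four_mod hh)) (od_sq_par hXo) (od_sq_mod hY) ?_
    rw [heq]; ring
  · exfalso
    obtain ⟨h', rfl⟩ := not_od hh
    refine main_caseII_mod' (r := v*(D*((1+gi)*h')^4) + (7+6*gi)*(k*h')^2) huv e1 (od_sq_par hY) ?_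
    rw [heq, hX]
    linear_combination (12-14*gi)*k^2*h'^2*gi_sq + (-28)*k^2*h'^2*gi_sq

theorem main_caseI_unit {Y k u v r : GaussianInt} (hY : od Y) (hk : od k)
    (huv : u*v = 1)
    (heq : Y^2 = u*k^4 + 2*r) : (u = 1 ∧ v = 1) ∨ (u = -1 ∧ v = -1) := by
  have e1 := od_four_mod hk
  have e2 := od_sq_par hY
  have a2 := congrArg Zsqrtd.im heq
  clear heq
  rcases unit_pair huv with h | h | ⟨rfl, rfl⟩ | ⟨rfl, rfl⟩
  · exact Or.inl h
  · exact Or.inr h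
  all_goals
    exfalso
    generalize k^4 = k4 at *
    generalize Y^2 = y2 at *
    simp at a2; omega

theorem main_step1_aux {X Y κ μ : GaussianInt} (hX0 : X ≠ 0) (hY : od Y) (hcY : ¬ (1-4*gi) ∣ Y)
    (hκ : od κ) (hco : IsCoprime κ μ) (hsum : κ + 4*μ = Y^2 + (14*gi-12)*X^2)
    (hprod : κ*μ = (1+2*gi)*((1-4*gi)^2*X^4)) :
    PP ((1+gi)*X) Y ∨ ∃ ω k h : GaussianInt, (ω = 1 ∨ ω = gi) ∧ ω*X = k*h ∧ od k ∧ IsCoprime k h ∧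
      (ω*Y)^2 = k^4 + (12-14*gi)*k^2*h^2 + 4*(1+2*gi)*(1-4*gi)^2*h^4 := by
  have hg := gi_sq
  have hc2 : (1-4*gi)^2 = -15-8*gi := by grind
  rcases strip hco prime_q 1 (by rw [hprod, pow_one]) with ⟨a, hb, hb2⟩ | ⟨a, hb, hb2⟩
  · left
    rw [pow_one] at hb
    have hc' : IsCoprime a μ := by rw [hb] at hco; exact hco.of_mul_left_right
    rcases strip hc' prime_c 2 hb2 with ⟨a', h1, h2⟩ | ⟨b', h1, h2⟩
    · obtain ⟨u, v, k, h, huv, i1, i2, i3, i4⟩ := fourth' (a := a') (b := μ) (by rw [h1] at hc'; exact hc'.of_mul_left_right) h2 hX0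
      have hk : od k := by
        rw [hb, h1, i1, od_mul, od_mul, od_mul] at hκ
        exact od_dvd (dvd_pow_self k four_ne_zero) hκ.2.2.2
      refine main_caseII (κ := a') (C := -15-8*gi) (D := 1) hY hk i3 huv i1 (by simp) (by simp) ?_
      rw [← hc2, ← h1, ← hb, one_mul, ← i2]
      linear_combination -hsum
    · obtain ⟨u, v, k, h, huv, i1, i2, i3, i4⟩ := fourth' (a := a) (b := b') (by rw [h1] at hc'; exact hc'.of_mul_right_right) h2 hX0
      have hk : od k := by
        rw [hb, i1, od_mul, od_mul] at hκ
        exact od_dvd (dvd_pow_self k four_ne_zero) hκ.2.2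
      refine main_caseII (κ := a) (C := 1) (D := -15-8*gi) hY hk i3 huv i1 (by simp) (by simp) ?_
      rw [← hc2, one_mul, ← hb, show v*((1-4*gi)^2*h^4) = (1-4*gi)^2*(v*h^4) by ring, ← i2, ← h1]
      linear_combination -hsum
  · right
    rw [pow_one] at hb
    have hc' : IsCoprime κ a := by rw [hb] at hco; exact hco.of_mul_right_right
    rcases strip hc' prime_c 2 hb2 with ⟨a', h1, h2⟩ | ⟨b', h1, h2⟩
    · exfalso
      obtain ⟨u, v, k, h, huv, i1, i2, i3, i4⟩ := fourth' (a := a') (b := a) (by rw [h1] at hc'; exact hc'.of_mul_left_right) h2 hX0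
      have hk : od k := by
        rw [h1, i1, od_mul, od_mul] at hκ
        exact od_dvd (dvd_pow_self k four_ne_zero) hκ.2.2
      have m : Y^2 = (1-4*gi)^2*(u*k^4) + (12-14*gi)*X^2 + 4*(1+2*gi)*(v*h^4) := by
        rw [← i1, ← i2, ← h1]
        linear_combination -hsum + 4*hb
      apply hcY
      rcases main_caseI_unit (u := u) (v := v) (r := (-8-4*gi)*(u*k^4) + (6-7*gi)*X^2 + 2*(1+2*gi)*(v*h^4)) hY hk huv (by rw [m]; grind) with ⟨rfl, rfl⟩ | ⟨rfl, rfl⟩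
      · refine mod_c_nonres (k := h) (t := (1-4*gi)*k^4 + (4+2*gi)*X^2) (4*(1+2*gi)) (by simp) ?_
        rw [m]; grind
      · rw [← isUnit_gi.dvd_mul_left]
        refine mod_c_nonres (k := h) (t := (1-4*gi)*k^4 - (4+2*gi)*X^2) (4*(1+2*gi)) (by simp) ?_
        rw [mul_pow, m]; grind
    · obtain ⟨u, v, k, h, huv, i1, i2, i3, i4⟩ := fourth' (a := κ) (b := b') (by rw [h1] at hc'; exact hc'.of_mul_right_right) h2 hX0
      have hk : od k := by
        rw [i1, od_mul] at hκ
        exact od_dvd (dvd_pow_self k four_ne_zero) hκ.2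
      have m : Y^2 = u*k^4 + (12-14*gi)*X^2 + 4*((1+2*gi)*((1-4*gi)^2*(v*h^4))) := by
        rw [← i1, ← i2, ← h1, ← hb]
        linear_combination -hsum
      rcases main_caseI_unit (u := u) (v := v) (r := (6-7*gi)*X^2 + 2*((1+2*gi)*((1-4*gi)^2*(v*h^4)))) hY hk huv (by rw [m]; ring) with ⟨rfl, rfl⟩ | ⟨rfl, rfl⟩
      · refine ⟨1, k, h, Or.inl rfl, by rw [i3, one_mul], hk, i4, ?_⟩
        rw [one_mul, m, i3]; ring
      · refine ⟨gi, gi*k, h, Or.inr rfl, by rw [i3, mul_assoc], (od_gi k).2 hk, (isCoprime_mul_unit_left_left isUnit_gi _ _).2 i4, ?_⟩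
        rw [mul_pow, m, i3]; grind

theorem four_split {κ κ' T : GaussianInt} (hκ : od κ) (hco : IsCoprime κ κ') (h : κ*κ' = 4*T) :
    ∃ μ, κ' = 4*μ ∧ κ*μ = T := by
  rcases strip hco prime_two 4 (y := -T) (by rw [h, show (1+gi)^4 = -4 by decide]; ring) with ⟨a, h1, h2⟩ | ⟨a, h1, h2⟩
  · exfalso
    rw [h1, pow_succ', mul_assoc] at hκ
    exact not_od_mul _ hκ
  · refine ⟨-a, ?_, by linear_combination -h2⟩
    rw [h1, show (1+gi)^4 = -4 by decide]; ring

theorem main_step1 {W X Y : GaussianInt} (hX0 : X ≠ 0) (hY : od Y) (hcY : ¬ (1-4*gi) ∣ Y)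
    (hXY : IsCoprime X Y)
    (heq : W^2 = Y^4 + (14+12*gi)*((1+gi)*X)^2*Y^2 + (17-68*gi)*((1+gi)*X)^4) :
    PP ((1+gi)*X) Y ∨ ∃ ω k h : GaussianInt, (ω = 1 ∨ ω = gi) ∧ ω*X = k*h ∧ od k ∧ IsCoprime k h ∧
      (ω*Y)^2 = k^4 + (12-14*gi)*k^2*h^2 + 4*(1+2*gi)*(1-4*gi)^2*h^4 := by
  have hg := gi_sq
  have hW2 : W^2 = Y^4 + 4*((-6+7*gi)*X^2*Y^2 - (17-68*gi)*X^4) := by rw [heq]; grind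
  have eY := od_sq_par hY
  have eY4 := od_four_mod hY
  have hWo : od W := by
    have : od (W^2) := by
      rw [hW2, show (4:GaussianInt) = 2*2 by norm_num, mul_assoc, od_two_mul]
      exact od_pow _ _ hY
    exact od_dvd (dvd_pow_self W two_ne_zero) this
  have hWim : W.im % 2 = 0 := by
    have e := od_sq_re4 hWo
    have a := congrArg Zsqrtd.re hW2
    generalize (-6+7*gi)*X^2*Y^2 - (17-68*gi)*X^4 = r at *
    generalize W^2 = w at *
    generalize Y^4 = y4 at *
    simp at a; omega
  obtain ⟨κ, hκ⟩ : ∃ κ, 2*κ = Y^2 + 2*((7*gi-6)*X^2) + W := by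
    unfold od at hWo
    generalize Y^2 = y2 at *
    generalize (7*gi-6)*X^2 = r at *
    refine ⟨⟨(y2 + 2*r + W).re/2, (y2 + 2*r + W).im/2⟩, ?_⟩
    rw [Zsqrtd.ext_iff]; simp; omega
  obtain ⟨κ', hκ'⟩ : ∃ κ', κ + κ' = Y^2 + (14*gi-12)*X^2 := ⟨Y^2 + (14*gi-12)*X^2 - κ, by ring⟩
  have hprod : κ*κ' = 4*((1+2*gi)*((1-4*gi)^2*X^4)) := by
    have h4 : (4:GaussianInt) ≠ 0 := by decide
    apply mul_left_cancel₀ h4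
    have : κ' = Y^2 + (14*gi-12)*X^2 - κ := by linear_combination hκ'
    subst this
    have : W = 2*κ - (Y^2 + 2*((7*gi-6)*X^2)) := by linear_combination -hκ
    subst this
    grind
  have hodd : od (κ + κ') := by
    rw [hκ', show Y^2 + (14*gi-12)*X^2 = Y^2 + 2*((7*gi-6)*X^2) by ring, od_two_mul]
    exact od_pow _ _ hY
  have hco : IsCoprime κ κ' := by
    apply coprime_of
    · intro h0; rw [h0, mul_zero] at hprod
      have : (4:GaussianInt) * ((1+2*gi)*((1-4*gi)^2*X^4)) ≠ 0 := by
        refine mul_ne_zero (by decide) (mul_ne_zero (by decide) (mul_ne_zero (by decide) (pow_ne_zero 4 hX0)))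
      exact this hprod.symm
    · intro p hp h1 h2
      have hps := dvd_add h1 h2
      have hpo := od_dvd hps hodd
      rw [hκ'] at hps
      have h3 : p ∣ 4*((1-4*gi)^2*X^4) := by
        apply prime_sq_dvd hp prime_q
        rw [show (1+2*gi)*(4*((1-4*gi)^2*X^4)) = 4*((1+2*gi)*((1-4*gi)^2*X^4)) by ring, ← hprod, pow_two]
        exact mul_dvd_mul h1 h2
      rw [show (4:GaussianInt) = 2*2 by norm_num, mul_assoc] at h3
      rcases hp.dvd_or_dvd (od_dvd_two hp hpo (od_dvd_two hp hpo h3)) with h | h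
      · have h5 := hp.dvd_of_dvd_pow h
        have h6 := prime_dvd_symm hp prime_c h5
        apply hcY
        have h7 : p ∣ (14*gi-12)*X^2 := by
          rw [show (14*gi-12) = (1-4*gi)*(-4-2*gi) by decide]
          exact (h5.mul_right _).mul_right _
        have := hp.dvd_of_dvd_pow ((dvd_add_left h7).1 hps)
        exact h6.trans this
      · have h5 := hp.dvd_of_dvd_pow h
        have h6 : p ∣ Y^2 := (dvd_add_left ((h5.trans (dvd_pow_self X two_ne_zero)).mul_left _)).1 hps
        exact hp.not_isUnit (hXY.isUnit_of_dvd' h5 (hp.dvd_of_dvd_pow h6))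
  by_cases hko : od κ
  · obtain ⟨μ, rfl, h2⟩ := four_split hko hco hprod
    refine main_step1_aux hX0 hY hcY hko ?_ hκ' h2
    exact hco.of_mul_right_right
  · have hko' : od κ' := by
      unfold od at hko hodd ⊢
      simp at hodd; omega
    obtain ⟨μ, rfl, h2⟩ := four_split hko' hco.symm (by rw [mul_comm]; exact hprod)
    refine main_step1_aux hX0 hY hcY hko' ?_ (by rw [← hκ']; ring) h2
    exact hco.symm.of_mul_right_right

theorem step2_even {Y k h : GaussianInt} (hY : od Y) (hk : od k)
    (heq : Y^2 = k^4 + (12-14*gi)*k^2*h^2 + 4*(1+2*gi)*(1-4*gi)^2*h^4) : ∃ h2, h = 2*h2 := by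
  have hg := gi_sq
  have ek := od_four_mod hk
  have eY := od_sq_mod hY
  have hh : ¬ od h := by
    intro hh
    have e1 := od_sq_par ((od_mul _ _).2 ⟨hk, hh⟩)
    have m : Y^2 = k^4 + (12-14*gi)*(k*h)^2 + 4*((1+2*gi)*(1-4*gi)^2*h^4) := by rw [heq]; ring
    have a2 := congrArg Zsqrtd.im m
    clear m heq
    generalize (1+2*gi)*(1-4*gi)^2*h^4 = r at *
    generalize k^4 = k4 at *
    generalize (k*h)^2 = kh at *
    generalize Y^2 = y at *
    simp at a2; omega
  obtain ⟨h1, rfl⟩ := not_od hh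
  have hh1 : ¬ od h1 := by
    intro hh
    have e1 := od_sq_par ((od_mul _ _).2 ⟨hk, hh⟩)
    have m : Y^2 = k^4 + 4*((7+6*gi)*(k*h1)^2) + 8*(-2*((1+2*gi)*(1-4*gi)^2*h1^4)) := by rw [heq]; grind
    have a1 := congrArg Zsqrtd.re m
    have a2 := congrArg Zsqrtd.im m
    clear m heq
    generalize (-2*((1+2*gi)*(1-4*gi)^2*h1^4)) = r at *
    generalize k^4 = k4 at *
    generalize (k*h1)^2 = kh at *
    generalize Y^2 = y at *
    simp at a1 a2; omega
  obtain ⟨h2, rfl⟩ := not_od hh1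
  exact ⟨gi*h2, by linear_combination h2*hg⟩

theorem alpha_mod {k2 p r s u v : GaussianInt} (huv : u*v = 1)
    (hk : (k2.re % 8 = 1 ∧ k2.im % 8 = 0) ∨ (k2.re % 8 = 7 ∧ k2.im % 8 = 0) ∨
    (k2.re % 8 = 3 ∧ k2.im % 8 = 4) ∨ (k2.re % 8 = 5 ∧ k2.im % 8 = 4))
    (hp : p.re % 8 = 1 ∧ p.im % 8 = 0)
    (hrs : (r.re % 2 = 0 ∧ r.im % 2 = 0 ∧ s.re % 2 = 0 ∧ s.im % 2 = 0) ∨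
      (r.re % 2 = 1 ∧ r.im % 2 = 0 ∧ s.re % 2 = 1 ∧ s.im % 2 = 0))
    (heq : k2 = (1+4*gi)*(u*p) - 4*(v*r) - (24-28*gi)*s) : False := by
  have a1 := congrArg Zsqrtd.re heq
  have a2 := congrArg Zsqrtd.im heq
  clear heq
  rcases unit_pair huv with ⟨rfl, rfl⟩ | ⟨rfl, rfl⟩ | ⟨rfl, rfl⟩ | ⟨rfl, rfl⟩ <;>
  simp at a1 a2 <;> omega

theorem alpha_par {f g D : GaussianInt} (hf : od f) (hD : D = 1 ∨ D = -15-8*gi) :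
    ((D*g^4).re % 2 = 0 ∧ (D*g^4).im % 2 = 0 ∧ ((f*g)^2).re % 2 = 0 ∧ ((f*g)^2).im % 2 = 0) ∨
      ((D*g^4).re % 2 = 1 ∧ (D*g^4).im % 2 = 0 ∧ ((f*g)^2).re % 2 = 1 ∧ ((f*g)^2).im % 2 = 0) := by
  by_cases hg : od g
  · right
    have e1 := mod8_mul hD (od_four_mod hg)
    have e2 := od_sq_par ((od_mul _ _).2 ⟨hf, hg⟩)
    omega
  · left
    obtain ⟨t, rfl⟩ := not_od hg
    have m1 : D*((1+gi)*t)^4 = 2*(-2*D*t^4) := by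
      rw [mul_pow, show (1+gi)^4 = -4 by decide]; ring
    have m2 : (f*((1+gi)*t))^2 = 2*(gi*f^2*t^2) := by
      rw [mul_pow, mul_pow, show (1+gi)^2 = 2*gi by decide]; ring
    rw [m1, m2]
    generalize (-2*D*t^4) = x
    generalize (gi*f^2*t^2) = y
    simp

set_option maxHeartbeats 1000000 in
theorem main_step2_aux {k h2 P2 R : GaussianInt} (hk : od k) (hh : h2 ≠ 0)
    (hP2 : od P2) (hco : IsCoprime P2 R)
    (hL : P2 - 4*R = k^2 + (24-28*gi)*h2^2)
    (hprod : P2*R = (1+4*gi)*((1-4*gi)^2*h2^4)) :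
    ∃ f g E κ : GaussianInt, k*h2 = E*f*g ∧ E.im % 2 = 0 ∧ od E ∧ od f ∧ IsCoprime g f ∧
      κ^2 = f^4 + (14+12*gi)*((1+gi)*g)^2*f^2 + (17-68*gi)*((1+gi)*g)^4 := by
  have hg := gi_sq
  have hc2 : (1-4*gi)^2 = -15-8*gi := by grind
  have ek := od_sq_mod hk
  rcases strip hco prime_e 1 (by rw [hprod, pow_one]) with ⟨a, hb, hb2⟩ | ⟨a, hb, hb2⟩
  · exfalso
    rw [pow_one] at hb
    have hc' : IsCoprime a R := by rw [hb] at hco; exact hco.of_mul_left_right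
    rcases strip hc' prime_c 2 hb2 with ⟨a', h1, h2⟩ | ⟨b', h1, h2⟩
    · obtain ⟨u, v, f, g, huv, i1, i2, i3, i4⟩ := fourth' (a := a') (b := R) (by rw [h1] at hc'; exact hc'.of_mul_left_right) h2 hh
      have hf : od f := by
        rw [hb, h1, i1, od_mul, od_mul, od_mul] at hP2
        exact od_dvd (dvd_pow_self f four_ne_zero) hP2.2.2.2
      refine alpha_mod huv ek (mod8_mul (C := -15-8*gi) (by simp) (od_four_mod hf)) (alpha_par (g := g) (D := 1) hf (by simp)) ?_
      rw [← i3, ← hc2, one_mul, ← i2, show u*((1-4*gi)^2*f^4) = (1-4*gi)^2*(u*f^4) by ring, ← i1, ← h1, ← hb]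
      linear_combination -hL
    · obtain ⟨u, v, f, g, huv, i1, i2, i3, i4⟩ := fourth' (a := a) (b := b') (by rw [h1] at hc'; exact hc'.of_mul_right_right) h2 hh
      have hf : od f := by
        rw [hb, i1, od_mul, od_mul] at hP2
        exact od_dvd (dvd_pow_self f four_ne_zero) hP2.2.2
      refine alpha_mod huv ek (od_four_mod hf) (alpha_par (g := g) (D := -15-8*gi) hf (by simp)) ?_
      rw [← i3, ← hc2, ← i1, ← hb, show v*((1-4*gi)^2*g^4) = (1-4*gi)^2*(v*g^4) by ring, ← i2, ← h1]
      linear_combination -hL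
  · rw [pow_one] at hb
    have hc' : IsCoprime P2 a := by rw [hb] at hco; exact hco.of_mul_right_right
    rcases strip hc' prime_c 2 hb2 with ⟨a', h1, h2⟩ | ⟨b', h1, h2⟩
    · exfalso
      obtain ⟨u, v, f, g, huv, i1, i2, i3, i4⟩ := fourth' (a := a') (b := a) (by rw [h1] at hc'; exact hc'.of_mul_left_right) h2 hh
      have hf : od f := by
        rw [h1, i1, od_mul, od_mul] at hP2
        exact od_dvd (dvd_pow_self f four_ne_zero) hP2.2.2
      have m : k^2 = (1-4*gi)^2*(u*f^4) - (24-28*gi)*(f*g)^2 - 4*((1+4*gi)*(v*g^4)) := by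
        rw [← i1, ← i2, ← h1, ← hb, ← i3]
        linear_combination -hL
      have hcg : ¬ (1-4*gi) ∣ (1+gi)*g := by
        intro hd
        rcases prime_c.dvd_or_dvd hd with hd | hd
        · obtain ⟨t, ht⟩ := hd
          have a1 := congrArg Zsqrtd.re ht
          have a2 := congrArg Zsqrtd.im ht
          simp at a1 a2; omega
        · exact coprime_c hc' (by rw [h1]; exact (dvd_pow_self _ two_ne_zero).mul_right _)
            (by rw [i2]; exact (hd.trans (dvd_pow_self g four_ne_zero)).mul_left _)
      rcases main_caseI_unit (u := u) (v := v) (r := (-8-4*gi)*(u*f^4) - (12-14*gi)*(f*g)^2 - 2*((1+4*gi)*(v*g^4))) hk hf huv (by rw [m]; grind) with ⟨rfl, rfl⟩ | ⟨rfl, rfl⟩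
      · refine lemma_B (w := k) (X := (1+gi)*g) (Y := f) (not_od_mul g) hf hcg ?_
        rw [m]; grind
      · refine lemma_B (w := gi*k) (X := (1+gi)*g) (Y := gi*f) (not_od_mul g) ((od_gi f).2 hf) hcg ?_
        rw [mul_pow, m]; grind
    · obtain ⟨u, v, f, g, huv, i1, i2, i3, i4⟩ := fourth' (a := P2) (b := b') (by rw [h1] at hc'; exact hc'.of_mul_right_right) h2 hh
      have hf : od f := by
        rw [i1, od_mul] at hP2
        exact od_dvd (dvd_pow_self f four_ne_zero) hP2.2
      have m : k^2 = u*f^4 + 4*(-(6-7*gi)*(f*g)^2 - (1+4*gi)*((1-4*gi)^2*(v*g^4))) := by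
        rw [← i1, ← i2, ← h1, ← i3]
        linear_combination -hL - 4*hb
      have ef := od_four_mod hf
      have ek2 := od_sq_re4 hk
      have a1 := congrArg Zsqrtd.re m
      rcases main_caseI_unit (u := u) (v := v) (r := 2*(-(6-7*gi)*(f*g)^2 - (1+4*gi)*((1-4*gi)^2*(v*g^4)))) hk hf huv (by rw [m]; ring) with ⟨rfl, rfl⟩ | ⟨rfl, rfl⟩
      · refine ⟨f, g, k, k, by rw [i3]; ring, ?_, hk, hf, i4.symm, ?_⟩
        · generalize (-(6-7*gi)*(f*g)^2 - (1+4*gi)*((1-4*gi)^2*(1*g^4))) = r at *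
          generalize f^4 = f4 at *
          generalize k^2 = k2 at *
          simp at a1; omega
        · rw [m]; grind
      · refine ⟨gi*f, g, -(gi*k), gi*k, by rw [i3]; grind, ?_, (od_neg _).2 ((od_gi k).2 hk), (od_gi f).2 hf,
          (isCoprime_mul_unit_left_right isUnit_gi _ _).2 i4.symm, ?_⟩
        · generalize (-(6-7*gi)*(f*g)^2 - (1+4*gi)*((1-4*gi)^2*(-1*g^4))) = r at *
          generalize f^4 = f4 at *
          generalize k^2 = k2 at *
          simp at a1 ⊢; omega
        · rw [mul_pow, m]; grind

theorem main_step2 {Y k h : GaussianInt} (hY : od Y) (hk : od k) (hcY : ¬ (1-4*gi) ∣ Y) (h0 : h ≠ 0)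
    (hkh : IsCoprime k h)
    (heq : Y^2 = k^4 + (12-14*gi)*k^2*h^2 + 4*(1+2*gi)*(1-4*gi)^2*h^4) :
    Y.im % 2 = 0 ∧ ∃ f g E κ : GaussianInt, k*h = 2*(E*f*g) ∧ E.im % 2 = 0 ∧ od E ∧ od f ∧ IsCoprime g f ∧
      κ^2 = f^4 + (14+12*gi)*((1+gi)*g)^2*f^2 + (17-68*gi)*((1+gi)*g)^4 := by
  have hg := gi_sq
  obtain ⟨h2, rfl⟩ := step2_even hY hk heq
  have eY := od_sq_re4 hY
  have hYim : Y.im % 2 = 0 := by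
    have ek := od_four_mod hk
    have m : Y^2 = k^4 + 4*((12-14*gi)*k^2*h2^2 + (1+2*gi)*(1-4*gi)^2*(2*h2)^4) := by rw [heq]; ring
    have a := congrArg Zsqrtd.re m
    clear m heq
    generalize ((12-14*gi)*k^2*h2^2 + (1+2*gi)*(1-4*gi)^2*(2*h2)^4) = r at *
    generalize k^4 = k4 at *
    generalize Y^2 = y at *
    simp at a; omega
  refine ⟨hYim, ?_⟩
  have ek := od_sq_par hk
  have hYo := hY
  obtain ⟨P2, hP2⟩ : ∃ P2, 2*P2 = Y + (k^2 + 2*((12-14*gi)*h2^2)) := by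
    unfold od at hYo
    generalize k^2 = k2 at *
    generalize (12-14*gi)*h2^2 = r at *
    refine ⟨⟨(Y + (k2 + 2*r)).re/2, (Y + (k2 + 2*r)).im/2⟩, ?_⟩
    rw [Zsqrtd.ext_iff]; simp; omega
  obtain ⟨P1, hP1⟩ : ∃ P1, P1 + P2 = Y := ⟨Y - P2, by ring⟩
  have hL : P2 - P1 = k^2 + (24-28*gi)*h2^2 := by linear_combination hP2 - hP1
  have hprod : P2*P1 = 4*((1+4*gi)*((1-4*gi)^2*h2^4)) := by
    have h4 : (4:GaussianInt) ≠ 0 := by decide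
    apply mul_left_cancel₀ h4
    have : P1 = Y - P2 := by linear_combination hP1
    subst this
    have : Y = 2*P2 - (k^2 + 2*((12-14*gi)*h2^2)) := by linear_combination -hP2
    subst this
    clear hP1 hP2 hL
    grind
  have h20 : h2 ≠ 0 := right_ne_zero_of_mul h0
  have hco : IsCoprime P2 P1 := by
    apply coprime_of
    · intro h0; rw [h0, mul_zero] at hprod
      have : (4:GaussianInt) * ((1+4*gi)*((1-4*gi)^2*h2^4)) ≠ 0 := by
        refine mul_ne_zero (by decide) (mul_ne_zero (by decide) (mul_ne_zero (by decide) (pow_ne_zero 4 h20)))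
      exact this hprod.symm
    · intro p hp h1 h2'
      have hps := dvd_add h2' h1
      rw [hP1] at hps
      have hpo := od_dvd hps hY
      have hpL := dvd_sub h1 h2'
      rw [hL] at hpL
      have h3 : p ∣ 4*((1-4*gi)^2*h2^4) := by
        apply prime_sq_dvd hp prime_e
        rw [show (1+4*gi)*(4*((1-4*gi)^2*h2^4)) = 4*((1+4*gi)*((1-4*gi)^2*h2^4)) by ring, ← hprod, pow_two]
        exact mul_dvd_mul h1 h2'
      rw [show (4:GaussianInt) = 2*2 by norm_num, mul_assoc] at h3
      rcases hp.dvd_or_dvd (od_dvd_two hp hpo (od_dvd_two hp hpo h3)) with h | h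
      · have h5 := hp.dvd_of_dvd_pow h
        exact hcY ((prime_dvd_symm hp prime_c h5).trans hps)
      · have h5 := hp.dvd_of_dvd_pow h
        have h6 : p ∣ k^2 := (dvd_add_left ((h5.trans (dvd_pow_self h2 two_ne_zero)).mul_left _)).1 hpL
        exact hp.not_isUnit (hkh.isUnit_of_dvd' (hp.dvd_of_dvd_pow h6) (h5.mul_left _))
  have fin : ∃ f g E κ : GaussianInt, k*h2 = E*f*g ∧ E.im % 2 = 0 ∧ od E ∧ od f ∧ IsCoprime g f ∧
      κ^2 = f^4 + (14+12*gi)*((1+gi)*g)^2*f^2 + (17-68*gi)*((1+gi)*g)^4 := by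
    by_cases hko : od P2
    · obtain ⟨R, rfl, h2⟩ := four_split hko hco hprod
      exact main_step2_aux hk h20 hko hco.of_mul_right_right hL h2
    · have hko' : od (-P1) := by
        rw [od_neg]
        rw [← hP1] at hY
        unfold od at hY hko ⊢
        simp at hY; omega
      obtain ⟨R, h1, h2⟩ := four_split hko' (κ' := -P2) hco.symm.neg_neg (by rw [← hprod]; ring)
      refine main_step2_aux hk h20 hko' ?_ (by rw [← h1, ← hL]; ring) h2
      have := hco.symm.neg_neg
      rw [h1] at this
      exact this.of_mul_right_right
  obtain ⟨f, g, E, κ, h1, h2⟩ := fin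
  exact ⟨f, g, E, κ, by rw [← h1]; ring, h2⟩

theorem PP_final {X Y f g E : GaussianInt} (hX : X = (1+gi)*(2*(E*f*g))) (hY : od Y) (hYi : Y.im % 2 = 0)
    (hE : od E) (hEi : E.im % 2 = 0) (hf : od f) (h : PP ((1+gi)*g) f) : PP X Y := by
  obtain ⟨j, g', h1, h2, t, ht⟩ := h
  have hg : g = 2^j*g' := by
    apply mul_left_cancel₀ prime_two.ne_zero
    rw [h1]; ring
  refine ⟨j+1, E*f*g', by rw [hX, hg]; ring, by rw [od_mul, od_mul]; exact ⟨⟨hE, hf⟩, h2⟩, ?_⟩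
  have hg' : g' = gi*f + 2*t := by linear_combination ht
  obtain ⟨a, ha⟩ : ∃ a, E = 1 + 2*a := by
    unfold od at hE
    refine ⟨⟨(E.re-1)/2, E.im/2⟩, ?_⟩
    rw [Zsqrtd.ext_iff]; simp; omega
  obtain ⟨b, hb⟩ : ∃ b, Y = 1 + 2*b := by
    unfold od at hY
    refine ⟨⟨(Y.re-1)/2, Y.im/2⟩, ?_⟩
    rw [Zsqrtd.ext_iff]; simp; omega
  obtain ⟨c, hc⟩ : ∃ c, f^2 = 1 + 2*c := by
    have e := od_sq_par hf
    generalize f^2 = F at *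
    refine ⟨⟨(F.re-1)/2, F.im/2⟩, ?_⟩
    rw [Zsqrtd.ext_iff]; simp; omega
  refine ⟨a*f*g' + f*t + gi*c - gi*b, ?_⟩
  rw [hg', ha, hb]
  linear_combination gi*hc

theorem main_cop (n : ℕ) : ∀ {W X Y : GaussianInt}, X.norm ≤ n → ¬ od X → X ≠ 0 → od Y → IsCoprime X Y →
    W^2 = Y^4 + (14+12*gi)*X^2*Y^2 + (17-68*gi)*X^4 → PP X Y := by
  induction n with
  | zero =>
    intro W X Y hn hX hX0
    have h0 := GaussianInt.norm_nonneg X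
    have : X.norm ≠ 0 := fun h' => hX0 ((Zsqrtd.norm_eq_zero_iff (by norm_num) X).1 h')
    simp at hn; omega
  | succ n ih =>
    intro W X Y hn hX hX0 hY hXY heq
    have hg := gi_sq
    by_cases hcY : (1-4*gi) ∣ Y
    · exfalso
      have hcX : ¬ (1-4*gi) ∣ X := fun h => coprime_c hXY h hcY
      obtain ⟨Y1, rfl⟩ := hcY
      obtain ⟨W1, rfl⟩ : (1-4*gi) ∣ W := by
        apply sq_dvd two_ne_zero
        exact ⟨(1-4*gi)^2*Y1^4 + (14+12*gi)*X^2*Y1^2 + (1+4*gi)*X^4, by rw [heq]; grind⟩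
      refine lemma_B (w := W1) hX ((od_mul _ _).1 hY).2 hcX ?_
      apply mul_left_cancel₀ (pow_ne_zero 2 prime_c.ne_zero)
      rw [← mul_pow, heq]; grind
    · obtain ⟨X1, rfl⟩ := not_od hX
      have hX10 : X1 ≠ 0 := right_ne_zero_of_mul hX0
      rcases main_step1 hX10 hY hcY hXY.of_mul_left_right heq with h | ⟨ω, k, h, hω, h1, h2, h3, h4⟩
      · exact h
      · have hωY : od (ω*Y) := by
          rcases hω with rfl | rfl
          · rwa [one_mul]
          · exact (od_gi Y).2 hY
        have hωc : ¬ (1-4*gi) ∣ ω*Y := by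
          rcases hω with rfl | rfl
          · rwa [one_mul]
          · rwa [isUnit_gi.dvd_mul_left]
        have hω0 : ω ≠ 0 := left_ne_zero_of_mul (od_ne hωY)
        have h0 : h ≠ 0 := by
          rintro rfl
          rw [mul_zero] at h1
          exact mul_ne_zero hω0 hX10 h1
        obtain ⟨hi, f, g, E, κ, j1, j2, j3, j4, j5, j6⟩ := main_step2 hωY h2 hωc h0 h3 h4
        have hgne : g ≠ 0 := by
          rintro rfl
          rw [mul_zero, mul_zero, ← h1] at j1
          exact mul_ne_zero hω0 hX10 j1
        have hn1 : ω.norm = 1 := by rcases hω with rfl | rfl <;> decide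
        have hnX : X1.norm = 4*(E.norm*f.norm*g.norm) := by
          have := congrArg Zsqrtd.norm (h1.trans j1)
          rw [Zsqrtd.norm_mul, hn1, one_mul, Zsqrtd.norm_mul, Zsqrtd.norm_mul, Zsqrtd.norm_mul] at this
          exact this
        have pE := norm_pos_of_od j3
        have pf := norm_pos_of_od j4
        have pg : 0 < g.norm := by
          have h0 := GaussianInt.norm_nonneg g
          have : g.norm ≠ 0 := fun h' => hgne ((Zsqrtd.norm_eq_zero_iff (by norm_num) g).1 h')
          omega
        have n2 : (1+gi).norm = 2 := by decide
        have hP : PP ((1+gi)*g) f := by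
          refine ih (W := κ) ?_ (not_od_mul g) (mul_ne_zero prime_two.ne_zero hgne) j4 ?_ j6
          · rw [Zsqrtd.norm_mul, n2]
            rw [Zsqrtd.norm_mul, n2, hnX] at hn
            push_cast at hn
            have : 1 ≤ E.norm*f.norm := by nlinarith
            nlinarith
          · refine IsCoprime.mul_left ?_ j5
            exact (prime_two.irreducible.coprime_iff_not_dvd).2 ((od_iff f).1 j4)
        have hP2 : PP ((1+gi)*(ω*X1)) (ω*Y) := PP_final (by rw [h1, j1]) hωY hi j3 j2 j4 hP
        rcases hω with rfl | rfl
        · simpa using hP2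
        · obtain ⟨j, X', l1, l2, t, l3⟩ := hP2
          refine ⟨j, -gi*X', ?_, ?_, -gi*t, ?_⟩
          · linear_combination (-gi)*l1 + (1+gi)*X1*hg
          · rw [neg_mul, od_neg, od_gi]; exact l2
          · linear_combination (-gi)*l3 - gi*Y*hg

theorem main_lemma {W X Y : GaussianInt} (hX : ¬ od X) (hX0 : X ≠ 0) (hY : od Y)
    (heq : W^2 = Y^4 + (14+12*gi)*X^2*Y^2 + (17-68*gi)*X^4) : PP X Y := by
  obtain ⟨g, X', Y', W', rfl, rfl, hc, h⟩ := jred (od_ne hY) heq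
  rw [od_mul] at hX hY
  obtain ⟨j, x, h1, h2, t, h3⟩ := main_cop X'.norm.toNat (by omega) (fun h => hX ⟨hY.1, h⟩) (right_ne_zero_of_mul hX0) hY.2 hc h
  exact ⟨j, g*x, by rw [h1]; ring, (od_mul _ _).2 ⟨hY.1, h2⟩, g*t, by linear_combination g*h3⟩

theorem sq_factor {z : GaussianInt} {y : ℤ} (hy : y ≠ 0) (he : (1+4*gi) ∣ z)
    (h : z * star z = 17*(y:GaussianInt)^2) (hc : IsCoprime z (star z)) :
    ∃ β, z = (1+4*gi)*β^2 ∨ z = gi*((1+4*gi)*β^2) := by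
  have hg := gi_sq
  obtain ⟨z1, rfl⟩ := he
  have hs : star ((1+4*gi)*z1) = (1-4*gi)*star z1 := by
    rw [Zsqrtd.ext_iff]; simp
  have h17 : (17:GaussianInt) ≠ 0 := by decide
  have h2 : z1 * star z1 = (y:GaussianInt)^2 := by
    apply mul_left_cancel₀ h17
    rw [← h, hs]; grind
  have hc' : IsCoprime z1 (star z1) := by
    rw [hs] at hc; exact hc.of_mul_left_right.of_mul_right_right
  obtain ⟨d, u, hu⟩ := exists_associated_pow_of_associated_pow_mul hc' (k := 2) (c := (y:GaussianInt)) (h2 ▸ Associated.refl _)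
  rcases unit_cases u.isUnit with h | h | h | h <;> rw [h] at hu
  · exact ⟨d, Or.inl (by rw [← hu]; ring)⟩
  · exact ⟨gi*d, Or.inl (by rw [← hu]; grind)⟩
  · exact ⟨d, Or.inr (by rw [← hu]; ring)⟩
  · exact ⟨gi*d, Or.inr (by rw [← hu]; grind)⟩

theorem cop_cast {r s : ℤ} (h : IsCoprime r s) : IsCoprime (r:GaussianInt) (s:GaussianInt) :=
  h.map (Int.castRingHom GaussianInt)

theorem sq_mod8_odd {a : ℤ} (h : a % 2 = 1) : (a^2) % 8 = 1 := by
  rcases Int.even_or_odd' a with ⟨k, rfl | rfl⟩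
  · omega
  · have : (2*k+1)^2 = 4*(k*(k+1)) + 1 := by ring
    have h2 : (k*(k+1)) % 2 = 0 := Int.even_iff.1 (Int.even_mul_succ_self k)
    omega

theorem s_mod17 {r s : ℤ} (hrs : IsCoprime r s) (h1 : (17:ℤ) ∣ r^2+4*s^2)
    (h2 : (17:ℤ) ∣ r^4+4*s^2*(r-s)^2) : ∃ m, s = 2*r + 17*m := by
  have key : ∀ a b : ZMod 17, a^2+4*b^2 = 0 → a^4+4*b^2*(a-b)^2 = 0 → b = 2*a := by decide
  have h3 := (ZMod.intCast_zmod_eq_zero_iff_dvd _ 17).2 h1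
  have h4 := (ZMod.intCast_zmod_eq_zero_iff_dvd _ 17).2 h2
  push_cast at h3 h4
  have h5 := key _ _ h3 h4
  have h6 : ((s - 2*r : ℤ) : ZMod 17) = 0 := by push_cast; rw [h5]; ring
  obtain ⟨m, hm⟩ := (ZMod.intCast_zmod_eq_zero_iff_dvd _ 17).1 h6
  exact ⟨m, by push_cast at hm; linarith⟩

theorem eb_mod {b y : GaussianInt} (hy : y = (1+4*gi)*b^2 ∨ y = gi*((1+4*gi)*b^2)) (hodd : od y)
    (hre : y.re % 8 = 1) (him : y.im % 4 = 0) : y = (1+4*gi)*b^2 ∧ od b ∧ y.im % 8 = 4 ∧ (b^2).re % 8 = 1 ∧ (b^2).im % 8 = 0 := by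
  have hb : od b := by
    rcases hy with rfl | rfl
    · rw [od_mul] at hodd; exact od_dvd (dvd_pow_self b two_ne_zero) hodd.2
    · rw [od_mul, od_mul] at hodd; exact od_dvd (dvd_pow_self b two_ne_zero) hodd.2.2
  have e := od_sq_mod hb
  generalize b^2 = B at *
  rcases hy with hy | hy
  · refine ⟨hy, hb, ?_⟩
    have a1 := congrArg Zsqrtd.re hy
    have a2 := congrArg Zsqrtd.im hy
    simp at a1 a2
    omega
  · exfalso
    have a1 := congrArg Zsqrtd.re hy
    have a2 := congrArg Zsqrtd.im hy
    simp at a1 a2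
    omega

theorem case17_even {R s y : ℤ} (hRs : IsCoprime R s) (hs : s % 2 = 1) (hR : R % 4 = 0)
    (hm : ∃ m, s = 4*R + 17*m)
    (h2 : 4*R^4 + s^2*(s-2*R)^2 = 17*y^2) : False := by
  have hg := gi_sq
  obtain ⟨l, rfl⟩ : ∃ l, R = 4*l := ⟨R/4, by omega⟩
  have hs8 := sq_mod8_odd hs
  have hy : y ≠ 0 := by
    rintro rfl
    have h0 : 4*(4*l)^4 ≥ 0 := by positivity
    have : s^2*(s-2*(4*l))^2 > 0 := by
      have : s ≠ 0 := by omega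
      have : s - 2*(4*l) ≠ 0 := by omega
      positivity
    nlinarith
  set q : GaussianInt := ⟨s^2 - 8*(l*s), -32*l^2⟩ with hq
  have hqe : q = (s:GaussianInt)^2 - 8*l*s - 32*l^2*gi := by
    rw [Zsqrtd.ext_iff]; simp [pow_two, hq]; ring
  have hqs : star q = (s:GaussianInt)^2 - 8*l*s + 32*l^2*gi := by
    rw [Zsqrtd.ext_iff]; simp [pow_two, hq]; ring
  have hodd : od q := by
    unfold od; simp only [hq]; omega
  have hcop := cop_cast hRs
  have hprod : q * star q = 17*(y:GaussianInt)^2 := by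
    have := congrArg (Int.cast : ℤ → GaussianInt) h2
    push_cast at this
    rw [hqs, hqe]; linear_combination this - 1024*l^4*hg
  have hco : IsCoprime q (star q) := by
    apply coprime_of
    · intro h0; rw [h0, mul_zero] at hprod
      have : (17:GaussianInt)*(y:GaussianInt)^2 ≠ 0 := mul_ne_zero (by decide) (pow_ne_zero 2 (by exact_mod_cast hy))
      exact this hprod.symm
    · intro p hp h1 h3
      have hpo := od_dvd h1 hodd
      have h4 : p ∣ 2*(2*(2*(2*(2*(2*(gi*(l:GaussianInt)^2)))))) := by
        have := dvd_sub h3 h1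
        rw [hqs, hqe] at this
        convert this using 1; ring
      have h5 := od_dvd_two hp hpo (od_dvd_two hp hpo (od_dvd_two hp hpo (od_dvd_two hp hpo (od_dvd_two hp hpo (od_dvd_two hp hpo h4)))))
      rw [isUnit_gi.dvd_mul_left] at h5
      have h6 := hp.dvd_of_dvd_pow h5
      have h7 : p ∣ (s:GaussianInt)^2 := by
        have : (s:GaussianInt)^2 = q + l*(8*s + 32*l*gi) := by rw [hqe]; ring
        rw [this]; exact dvd_add h1 (h6.mul_right _)
      refine hp.not_isUnit (hcop.isUnit_of_dvd' ?_ (hp.dvd_of_dvd_pow h7))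
      push_cast; exact h6.mul_left _
  have hed : (1+4*gi) ∣ q := by
    obtain ⟨m, hm⟩ := hm
    have hm' := congrArg (Int.cast : ℤ → GaussianInt) hm
    push_cast at hm'
    refine ⟨-32*gi*l^2 + (1-4*gi)*(m*(17*m+24*l)), ?_⟩
    rw [hqe, hm']; grind
  obtain ⟨β, hβ⟩ := sq_factor hy hed hprod hco
  have := eb_mod hβ hodd (by simp only [hq]; omega) (by simp only [hq]; omega)
  have h8 : q.im % 8 = 4 := this.2.2.1
  simp only [hq] at h8; omega

theorem core17 {p l N m n : ℤ} {β τ : GaussianInt} (hp : p = m^2-n^2) (hp2 : p % 2 = 1) (hl : m*n = 4*l)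
    (hl0 : l ≠ 0) (hN : N = m^2+n^2)
    (hτ : (N:GaussianInt) - β = 4*τ)
    (hβ : (N:GaussianInt)^2 - β^2 = 8*l*(-(4+3*gi)*p + (28*gi-8)*l)) : False := by
  have hg := gi_sq
  set D : GaussianInt := -(4+3*gi)*p + (28*gi-8)*l with hD
  have hDo : od D := by
    unfold od; simp [hD]; omega
  have hN2 : N % 2 = 1 := by
    have : N = p + 2*n^2 := by rw [hN, hp]; ring
    omega
  have hlg : (l:GaussianInt) ≠ 0 := by exact_mod_cast hl0
  have hβ' : β = N - 4*τ := by linear_combination -hτ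
  have ht : τ*(N-2*τ) = l*D := by
    have h8 : (8:GaussianInt) ≠ 0 := by decide
    apply mul_left_cancel₀ h8
    rw [hβ'] at hβ; linear_combination hβ
  have hτ0 : τ ≠ 0 := by
    rintro rfl
    rw [zero_mul] at ht
    exact mul_ne_zero hlg (od_ne hDo) ht.symm
  obtain ⟨X, hX⟩ : ∃ X : GaussianInt, X = m + n*gi := ⟨_, rfl⟩
  obtain ⟨Y, hY⟩ : ∃ X : GaussianInt, X = m - n*gi := ⟨_, rfl⟩
  have hpg := congrArg (Int.cast : ℤ → GaussianInt) hp
  have hlg' := congrArg (Int.cast : ℤ → GaussianInt) hl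
  have hNg := congrArg (Int.cast : ℤ → GaussianInt) hN
  push_cast at hpg hlg' hNg
  have hXY : X*Y = N := by rw [hX, hY, hNg]; linear_combination -(n:GaussianInt)^2*hg
  have hX2 : X^2 = p + 8*l*gi := by
    rw [hX, hpg]; linear_combination (n:GaussianInt)^2*hg + 2*gi*hlg'
  have hY2 : Y^2 = p - 8*l*gi := by
    rw [hY, hpg]; linear_combination (n:GaussianInt)^2*hg - 2*gi*hlg'
  have hNN : (N:GaussianInt)^2 = p^2+64*l^2 := by
    rw [← hXY, mul_pow, hX2, hY2]; linear_combination -64*(l:GaussianInt)^2*hg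
  have hw : (-2*(1+gi)*β)^2 = (1+4*gi)*X^4+(14+12*gi)*X^2*Y^2+(1-4*gi)^2*Y^4 := by
    have e1 : X^4 = (p + 8*l*gi)^2 := by rw [← hX2]; ring
    have e2 : Y^4 = (p - 8*l*gi)^2 := by rw [← hY2]; ring
    have e3 : β^2 = p^2+64*l^2 - 8*l*D := by linear_combination hNN - hβ
    rw [e1, e2, hX2, hY2, mul_pow, e3, hD]
    clear_value D
    clear e1 e2 e3 hD hX2 hY2 hNN hXY hX hY ht hβ hβ' hτ hDo
    generalize (p:GaussianInt) = P at *
    generalize (l:GaussianInt) = L at *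
    grind
  obtain ⟨W3, hW⟩ := shift hw
  have hY3 : ((1-4*gi)^2*Y^2-(1+4*gi)*X^2) = 4*D := by
    rw [hX2, hY2, hD]; linear_combination (16*p+32*l-128*l*gi : GaussianInt)*hg
  have hX3 : ((2+2*gi)*X*Y+(-2*(1+gi)*β)) = 4*(2*(1+gi)*τ) := by
    rw [mul_assoc, hXY, hβ']; ring
  rw [hY3, hX3] at hW
  have hd : (16:GaussianInt) ∣ W3 := by
    apply sq_dvd (n := 2) two_ne_zero
    rw [hW]
    exact ⟨D^4 + (14+12*gi)*(2*(1+gi)*τ)^2*D^2 + (17-68*gi)*(2*(1+gi)*τ)^4, by ring⟩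
  obtain ⟨W, rfl⟩ := hd
  have hJ : W^2 = D^4 + (14+12*gi)*(2*(1+gi)*τ)^2*D^2 + (17-68*gi)*(2*(1+gi)*τ)^4 := by
    have h8 : (256:GaussianInt) ≠ 0 := by decide
    apply mul_left_cancel₀ h8
    linear_combination hW
  have h1g : (1+gi) ≠ 0 := by decide
  have hPP := main_lemma (by unfold od; simp) (mul_ne_zero (mul_ne_zero (by decide) h1g) hτ0) hDo hJ
  obtain ⟨j, X', hj, hXo, t, ht'⟩ := hPP
  have h2t : 2*τ = 2^j*X' := by
    apply mul_left_cancel₀ h1g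
    linear_combination hj
  rcases j with _ | i
  · rw [pow_zero, one_mul] at h2t
    rw [← h2t] at hXo
    unfold od at hXo; simp at hXo
  have hτX : τ = 2^i*X' := by
    apply mul_left_cancel₀ (two_ne_zero : (2:GaussianInt) ≠ 0)
    rw [h2t]; ring
  have hXX : X' = gi*D + 2*t := by linear_combination ht'
  have hfin : X' * star D * (N - 2*τ) * ((2^i : ℤ) : GaussianInt) = ((l * D.norm : ℤ) : GaussianInt) := by
    push_cast
    rw [Zsqrtd.norm_eq_mul_conj]
    have : (2:GaussianInt)^i*X'*(N-2*τ) = l*D := by rw [← hτX]; exact ht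
    linear_combination star D * this
  have him := congrArg Zsqrtd.im hfin
  rw [Zsqrtd.im_intCast, Zsqrtd.im_mul, Zsqrtd.im_intCast, Zsqrtd.re_intCast] at him
  have him2 : (X' * star D * (N - 2*τ)).im = 0 := by
    have h2 : (2^i:ℤ) ≠ 0 := by positivity
    have : (X' * star D * (N - 2*τ)).im * 2^i = 0 := by linarith
    exact (mul_eq_zero.1 this).resolve_right h2
  have hfin2 : X' * star D * (N - 2*τ) = gi*((D.norm*N:ℤ):GaussianInt) + 2*(t*star D*(N-2*τ) - gi*D*star D*τ) := by
    push_cast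
    rw [Zsqrtd.norm_eq_mul_conj, hXX]; ring
  have hno : D.norm % 2 = 1 := by
    have h0 : D.norm = D.re*D.re + D.im*D.im := by rw [Zsqrtd.norm_def]; ring
    rw [h0]
    unfold od at hDo
    rcases Int.even_or_odd' D.re with ⟨a, ha | ha⟩ <;> rcases Int.even_or_odd' D.im with ⟨b, hb | hb⟩ <;> rw [ha, hb] at hDo ⊢ <;> ring_nf <;> omega
  have hnoN : (D.norm*N) % 2 = 1 := by
    rw [Int.mul_emod, hno, hN2]; norm_num
  generalize t*star D*(N-2*τ) - gi*D*star D*τ = Z at *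
  rw [hfin2] at him2
  generalize D.norm * N = K at *
  simp at him2
  omega

theorem beta_mod {b : GaussianInt} (hb : od b) (h1 : (b^2).re % 8 = 1) (h2 : (b^2).im % 8 = 0) :
    b.re % 2 = 1 ∧ b.im % 4 = 0 := by
  have e1 : (b^2).re = b.re^2 - b.im^2 := by rw [pow_two]; simp; ring
  have e2 : (b^2).im = 2*(b.re*b.im) := by rw [pow_two]; simp; ring
  rw [e1] at h1; rw [e2] at h2
  unfold od at hb
  have hb1 : b.re % 2 = 1 := by
    by_contra h
    have h3 := sq_mod8_odd (a := b.im) (by omega)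
    obtain ⟨k, hk⟩ : ∃ k, b.re = 2*k := ⟨b.re/2, by omega⟩
    have : b.re^2 = 4*k^2 := by rw [hk]; ring
    omega
  refine ⟨hb1, ?_⟩
  obtain ⟨k, hk⟩ : ∃ k, b.re = 2*k+1 := ⟨b.re/2, by omega⟩
  obtain ⟨j, hj⟩ : ∃ k, b.im = 2*k := ⟨b.im/2, by omega⟩
  have : b.re*b.im = 4*(k*j)+2*j := by rw [hk, hj]; ring
  omega

theorem case17_odd {r s x y : ℤ} (hrs : IsCoprime r s) (hr : r % 2 = 1) (hx : x ≠ 0) (hy : y ≠ 0)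
    (hm : ∃ m, s*2 = 2*r + 17*m)
    (h1 : r^2 + 16*s^2 = 17*x^2) (h2 : r^4 + 16*s^2*(r-2*s)^2 = 17*y^2) : s = r := by
  have hg := gi_sq
  have hs8 := sq_mod8_odd hr
  obtain ⟨M, hm⟩ := hm
  have hm' := congrArg (Int.cast : ℤ → GaussianInt) hm
  have h1' := congrArg (Int.cast : ℤ → GaussianInt) h1
  have h2' := congrArg (Int.cast : ℤ → GaussianInt) h2
  push_cast at hm' h1' h2'
  have hcop := cop_cast hrs
  -- first factorization
  obtain ⟨q, hq⟩ : ∃ q : GaussianInt, q = ⟨r^2, 4*(s*(2*s-r))⟩ := ⟨_, rfl⟩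
  have hqe : q = (r:GaussianInt)^2 + 4*(s*(2*s-r))*gi := by
    rw [Zsqrtd.ext_iff]; simp [pow_two, hq]
  have hqs : star q = (r:GaussianInt)^2 - 4*(s*(2*s-r))*gi := by
    rw [Zsqrtd.ext_iff]; simp [pow_two, hq]
  have hodd : od q := by
    unfold od; simp only [hq]; omega
  have hprod : q * star q = 17*(y:GaussianInt)^2 := by
    rw [hqs, hqe]; linear_combination h2' - 16*(s*(2*s-r):GaussianInt)^2*hg
  have hco : IsCoprime q (star q) := by
    apply coprime_of
    · intro h0; rw [h0, mul_zero] at hprod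
      have : (17:GaussianInt)*(y:GaussianInt)^2 ≠ 0 := mul_ne_zero (by decide) (pow_ne_zero 2 (by exact_mod_cast hy))
      exact this hprod.symm
    · intro p hp h1 h3
      have hpo := od_dvd h1 hodd
      have h4 : p ∣ 2*((r:GaussianInt)^2) := by
        have := dvd_add h3 h1
        rw [hqs, hqe] at this
        convert this using 1; ring
      have h6 := hp.dvd_of_dvd_pow (od_dvd_two hp hpo h4)
      have h7 : p ∣ 2*(2*(2*(gi*(s:GaussianInt)^2))) := by
        have : 2*(2*(2*(gi*(s:GaussianInt)^2))) = q - r*(r - 4*s*gi) := by rw [hqe]; ring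
        rw [this]; exact dvd_sub h1 (h6.mul_right _)
      have h5 := od_dvd_two hp hpo (od_dvd_two hp hpo (od_dvd_two hp hpo h7))
      rw [isUnit_gi.dvd_mul_left] at h5
      exact hp.not_isUnit (hcop.isUnit_of_dvd' h6 (hp.dvd_of_dvd_pow h5))
  have hed : (1+4*gi) ∣ q := by
    refine ⟨r^2 + (1-4*gi)*(2*gi*(M*(17*M+3*r))), ?_⟩
    have : q = (r:GaussianInt)^2 + 2*((s*2)*((s*2)-r))*gi := by rw [hqe]; ring
    rw [this, hm']; linear_combination (32*(17*M^2+3*M*r)*gi:GaussianInt)*hg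
  obtain ⟨β, hβ⟩ := sq_factor hy hed hprod hco
  obtain ⟨hqβ, hβo, him8, hb1, hb2⟩ := eb_mod hβ hodd (by simp only [hq]; omega) (by simp only [hq]; omega)
  have hso : s % 2 = 1 := by
    simp only [hq] at him8
    rcases Int.even_or_odd' s with ⟨k, rfl | rfl⟩
    · exfalso
      have : 4*(2*k*(2*(2*k)-r)) = 8*(k*(2*(2*k)-r)) := by ring
      omega
    · omega
  obtain ⟨hb3, hb4⟩ := beta_mod hβo hb1 hb2
  -- second factorization
  obtain ⟨z, hz⟩ : ∃ z : GaussianInt, z = ⟨r, 4*s⟩ := ⟨_, rfl⟩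
  have hze : z = (r:GaussianInt) + 4*s*gi := by
    rw [Zsqrtd.ext_iff]; simp [hz]
  have hzs : star z = (r:GaussianInt) - 4*s*gi := by
    rw [Zsqrtd.ext_iff]; simp [hz]
  have hoddz : od z := by
    unfold od; simp only [hz]; omega
  have hprodz : z * star z = 17*(x:GaussianInt)^2 := by
    rw [hzs, hze]; linear_combination h1' - 16*(s:GaussianInt)^2*hg
  have hcoz : IsCoprime z (star z) := by
    apply coprime_of
    · intro h0; rw [h0, mul_zero] at hprodz
      have : (17:GaussianInt)*(x:GaussianInt)^2 ≠ 0 := mul_ne_zero (by decide) (pow_ne_zero 2 (by exact_mod_cast hx))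
      exact this hprodz.symm
    · intro p hp h1 h3
      have hpo := od_dvd h1 hoddz
      have h4 : p ∣ 2*(r:GaussianInt) := by
        have := dvd_add h3 h1
        rw [hzs, hze] at this
        convert this using 1; ring
      have h6 := od_dvd_two hp hpo h4
      have h7 : p ∣ 2*(2*(gi*(s:GaussianInt))) := by
        have : 2*(2*(gi*(s:GaussianInt))) = z - r := by rw [hze]; ring
        rw [this]; exact dvd_sub h1 h6
      have h5 := od_dvd_two hp hpo (od_dvd_two hp hpo h7)
      rw [isUnit_gi.dvd_mul_left] at h5
      exact hp.not_isUnit (hcop.isUnit_of_dvd' h6 h5)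
  have hedz : (1+4*gi) ∣ z := by
    refine ⟨r + (1-4*gi)*(2*gi*M), ?_⟩
    have : z = (r:GaussianInt) + 2*(s*2)*gi := by rw [hze]; ring
    rw [this, hm']; linear_combination (32*M*gi:GaussianInt)*hg
  obtain ⟨μ, hμ⟩ := sq_factor hx hedz hprodz hcoz
  have hμo : od μ := by
    rcases hμ with h | h
    · rw [h, od_mul] at hoddz; exact od_dvd (dvd_pow_self μ two_ne_zero) hoddz.2
    · rw [h, od_mul, od_mul] at hoddz; exact od_dvd (dvd_pow_self μ two_ne_zero) hoddz.2.2
  have hpar := od_sq_par hμo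
  obtain ⟨m, n⟩ := μ
  have e1 : ((⟨m,n⟩:GaussianInt)^2).re = m^2-n^2 := by rw [pow_two]; simp; ring
  have e2 : ((⟨m,n⟩:GaussianInt)^2).im = 2*(m*n) := by rw [pow_two]; simp; ring
  rw [e1, e2] at hpar
  have hz1 : z.re = r := by rw [hz]
  have hz2 : z.im = 4*s := by rw [hz]
  obtain ⟨p, hp⟩ : ∃ p, p = m^2 - n^2 := ⟨_, rfl⟩
  rw [← hp] at hpar e1
  generalize ((⟨m,n⟩:GaussianInt)^2) = B at *
  rcases hμ with h | h
  swap
  · exfalso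
    have a1 := congrArg Zsqrtd.re h
    rw [hz1] at a1
    simp [e1, e2] at a1
    omega
  have a1 := congrArg Zsqrtd.re h
  have a2 := congrArg Zsqrtd.im h
  rw [hz1] at a1
  rw [hz2] at a2
  simp [e1, e2] at a1 a2
  obtain ⟨l, hl⟩ : ∃ l, m*n = 4*l := ⟨m*n/4, by omega⟩
  rw [hl] at a1 a2
  by_cases hl0 : l = 0
  · omega
  exfalso
  have hrl : r = p - 32*l := by omega
  have hsl : s = p + 2*l := by omega
  obtain ⟨N, hN⟩ : ∃ N, N = m^2 + n^2 := ⟨_, rfl⟩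
  have hN2 : N % 2 = 1 := by
    have : N = p + 2*n^2 := by rw [hN, hp]; ring
    omega
  have hNN : N^2 = p^2+64*l^2 := by
    rw [hN, hp]
    have : 64*l^2 = 4*(4*l)^2 := by ring
    rw [this, ← hl]; ring
  have hNN' := congrArg (Int.cast : ℤ → GaussianInt) hNN
  have hrl' := congrArg (Int.cast : ℤ → GaussianInt) hrl
  have hsl' := congrArg (Int.cast : ℤ → GaussianInt) hsl
  push_cast at hNN' hrl' hsl'
  have hE : (N:GaussianInt)^2 - β^2 = 8*l*(-(4+3*gi)*p + (28*gi-8)*l) := by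
    have he : (1+4*gi) ≠ 0 := by decide
    apply mul_left_cancel₀ he
    rw [mul_sub, ← hqβ, hNN', hqe, hrl', hsl']
    linear_combination (8*l*(12*p-112*l):GaussianInt)*hg
  by_cases hc : (N - β.re) % 4 = 0
  · refine core17 hp hpar.1 hl hl0 hN (τ := ⟨(N-β.re)/4, -(β.im/4)⟩) (β := β) ?_ hE
    rw [Zsqrtd.ext_iff]; simp; omega
  · refine core17 hp hpar.1 hl hl0 hN (τ := ⟨(N+β.re)/4, (β.im/4)⟩) (β := -β) ?_ (by rw [neg_sq]; exact hE)
    rw [Zsqrtd.ext_iff]; simp; omega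

theorem case17 {r s x y : ℤ} (hrs : IsCoprime r s) (hr0 : r ≠ 0)
    (h1 : r^2 + 4*s^2 = 17*x^2) (h2 : r^4 + 4*s^2*(r-s)^2 = 17*y^2) : s = 2*r := by
  have hm := s_mod17 hrs ⟨_, h1⟩ ⟨_, h2⟩
  have hx : x ≠ 0 := by
    rintro rfl
    have : r^2 > 0 := by positivity
    nlinarith [sq_nonneg s]
  have hy : y ≠ 0 := by
    rintro rfl
    have : r^4 > 0 := by positivity
    nlinarith [sq_nonneg (s*(r-s))]
  rcases Int.even_or_odd' r with ⟨R, rfl | hR⟩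
  · exfalso
    have hs : s % 2 = 1 := by
      by_contra h
      have : IsUnit (2:ℤ) := hrs.isUnit_of_dvd' ⟨R, rfl⟩ (by omega)
      norm_num [Int.isUnit_iff] at this
    obtain ⟨x1, rfl⟩ : ∃ k, x = 2*k := by
      rcases Int.even_or_odd' x with ⟨k, h | h⟩
      · exact ⟨k, h⟩
      · have := sq_mod8_odd (a := x) (by omega)
        have e : (2*R)^2 = 4*R^2 := by ring
        omega
    obtain ⟨y1, rfl⟩ : ∃ k, y = 2*k := by
      rcases Int.even_or_odd' y with ⟨k, h | h⟩
      · exact ⟨k, h⟩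
      · have := sq_mod8_odd (a := y) (by omega)
        have e : (2*R)^4 + 4*s^2*(2*R-s)^2 = 4*(4*R^4 + s^2*(2*R-s)^2) := by ring
        omega
    have h3 : R^2 + s^2 = 17*x1^2 := by linarith
    have h4 : 4*R^4 + s^2*(s-2*R)^2 = 17*y1^2 := by linarith
    have hs8 := sq_mod8_odd hs
    have hR4 : R % 4 = 0 := by
      rcases Int.even_or_odd' R with ⟨k, h | h⟩
      · rcases Int.even_or_odd' x1 with ⟨j, h' | h'⟩
        · have e1 : R^2 = 4*k^2 := by rw [h]; ring
          have e2 : x1^2 = 4*j^2 := by rw [h']; ring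
          omega
        · have := sq_mod8_odd (a := x1) (by omega)
          have e1 : R^2 = 4*k^2 := by rw [h]; ring
          rcases Int.even_or_odd' k with ⟨i, hi | hi⟩
          · omega
          · have := sq_mod8_odd (a := k) (by omega)
            omega
      · have := sq_mod8_odd (a := R) (by omega)
        rcases Int.even_or_odd' x1 with ⟨j, h' | h'⟩
        · have e2 : x1^2 = 4*j^2 := by rw [h']; ring
          omega
        · have := sq_mod8_odd (a := x1) (by omega)
          omega
    obtain ⟨m, hm⟩ := hm
    exact case17_even hrs.of_mul_left_right hs hR4 ⟨m, by linarith⟩ h4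
  · have hr : r % 2 = 1 := by omega
    have hr8 := sq_mod8_odd hr
    obtain ⟨t, rfl⟩ : ∃ k, s = 2*k := by
      rcases Int.even_or_odd' s with ⟨k, h | h⟩
      · exact ⟨k, h⟩
      · have := sq_mod8_odd (a := s) (by omega)
        rcases Int.even_or_odd' x with ⟨j, h' | h'⟩
        · have e2 : x^2 = 4*j^2 := by rw [h']; ring
          omega
        · have := sq_mod8_odd (a := x) (by omega)
          omega
    obtain ⟨m, hm⟩ := hm
    have := case17_odd hrs.of_mul_right_right hr hx hy ⟨m, by linarith⟩ (by linarith) (y := y) (by linarith)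
    linarith

theorem int_cop {a b : ℤ} (h0 : ¬ (a = 0 ∧ b = 0)) (h : ∀ p : ℤ, Prime p → p ∣ a → p ∣ b → False) : IsCoprime a b :=
  isCoprime_of_prime_dvd h0 (fun p hp h1 h2 => h p hp h1 h2)

theorem cop_absurd {a b p : ℤ} (h : IsCoprime a b) (hp : Prime p) (h1 : p ∣ a) (h2 : p ∣ b) : False :=
  hp.not_isUnit (h.isUnit_of_dvd' h1 h2)

theorem pos_fourth {A B y : ℤ} (hc : IsCoprime A B) (hA : 0 < A) (h : A*B = y^4) : ∃ f, A = f^4 := by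
  obtain ⟨d, hd⟩ := exists_associated_pow_of_associated_pow_mul hc (k := 4) (c := y) (h ▸ Associated.refl _)
  rcases Int.associated_iff.1 hd with h | h
  · exact ⟨d, h.symm⟩
  · have : d^4 ≥ 0 := by positivity
    omega

theorem five_fourth_aux {A B y : ℤ} (hc : IsCoprime A B) (hA : 0 < A) (hB : 0 < B) (h : A*B = 5*y^4)
    (h5 : 5 ∣ B) : ∃ f g, y = f*g ∧ IsCoprime f g ∧ A = f^4 ∧ B = 5*g^4 := by
  obtain ⟨B', rfl⟩ := h5
  have hc' := hc.of_mul_right_right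
  have h' : A*B' = y^4 := by linarith
  obtain ⟨f, rfl⟩ := pos_fourth hc' hA h'
  obtain ⟨g, rfl⟩ := pos_fourth hc'.symm (by omega) (by rw [mul_comm]; exact h')
  have hfg : IsCoprime f g := (IsCoprime.pow_iff (by norm_num) (by norm_num)).1 hc'
  have hy : (y^2)^2 = ((f*g)^2)^2 := by linear_combination -h'
  have hy2 : y^2 = (f*g)^2 := by
    exact (pow_left_inj₀ (sq_nonneg y) (sq_nonneg (f*g)) two_ne_zero).1 hy
  rcases sq_eq_sq_iff_eq_or_eq_neg.1 hy2 with h | h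
  · exact ⟨f, g, h, hfg, rfl, rfl⟩
  · exact ⟨-f, g, by rw [h]; ring, hfg.neg_left, by ring, rfl⟩

theorem five_fourth {A B y : ℤ} (hc : IsCoprime A B) (hA : 0 < A) (hB : 0 < B) (h : A*B = 5*y^4) :
    ∃ f g, y = f*g ∧ IsCoprime f g ∧ A + B = f^4 + 5*g^4 := by
  have p5 : Prime (5:ℤ) := by rw [Int.prime_iff_natAbs_prime]; norm_num
  rcases p5.dvd_or_dvd ⟨_, h⟩ with h5 | h5
  · obtain ⟨f, g, h1, h2, h3, h4⟩ := five_fourth_aux hc.symm hB hA (by rw [mul_comm]; exact h) h5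
    exact ⟨f, g, h1, h2, by rw [h3, h4]; ring⟩
  · obtain ⟨f, g, h1, h2, h3, h4⟩ := five_fourth_aux hc hA hB h h5
    exact ⟨f, g, h1, h2, by rw [h3, h4]⟩

theorem both_pos {A B : ℤ} (h : 0 < A*B) (h' : 0 < A+B) : 0 < A ∧ 0 < B := by
  rcases pos_and_pos_or_neg_and_neg_of_mul_pos h with h | h
  · exact h
  · omega

theorem five_res {X Y : ℤ} (h : (5:ℤ) ∣ X^2+2*Y^2) : 5 ∣ X ∧ 5 ∣ Y := by
  have key : ∀ a b : ZMod 5, a^2+2*b^2 = 0 → a = 0 ∧ b = 0 := by decide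
  have h3 := (ZMod.intCast_zmod_eq_zero_iff_dvd _ 5).2 h
  push_cast at h3
  have := key _ _ h3
  exact ⟨(ZMod.intCast_zmod_eq_zero_iff_dvd _ 5).1 this.1, (ZMod.intCast_zmod_eq_zero_iff_dvd _ 5).1 this.2⟩

theorem p5' : Prime (5:ℤ) := by rw [Int.prime_iff_natAbs_prime]; norm_num

theorem prime_dvd_five {p : ℤ} (hp : Prime p) (h : p ∣ 5) : (5:ℤ) ∣ p :=
  (hp.associated_of_dvd p5' h).symm.dvd

theorem pyth {x y z : ℤ} (hc : IsCoprime x y) (hx : x % 2 = 1) (h : x^2+y^2 = z^2) :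
    ∃ m n, x = m^2-n^2 ∧ y = 2*m*n ∧ z^2 = (m^2+n^2)^2 ∧ IsCoprime m n ∧ (m % 2 = 0 ∧ n % 2 = 1 ∨ m % 2 = 1 ∧ n % 2 = 0) ∧ 0 ≤ m := by
  have hz : z ≠ 0 := by
    rintro rfl
    have : x ≠ 0 := by rintro rfl; omega
    have : 0 < x^2 := by positivity
    nlinarith [sq_nonneg y]
  have ht : PythagoreanTriple x y |z| := by
    unfold PythagoreanTriple
    rw [abs_mul_abs_self]; linarith
  obtain ⟨m, n, h1, h2, h3, h4, h5, h6⟩ := ht.coprime_classification' (Int.isCoprime_iff_gcd_eq_one.1 hc) hx (abs_pos.2 hz)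
  exact ⟨m, n, h1, h2, by rw [← h3, sq_abs], Int.isCoprime_iff_gcd_eq_one.2 h4, h5, h6⟩

theorem pos_sq {A B y : ℤ} (hc : IsCoprime A B) (hA : 0 < A) (h : A*B = y^2) : ∃ f, A = f^2 := by
  obtain ⟨d, hd⟩ := Int.sq_of_isCoprime hc h
  rcases hd with h | h
  · exact ⟨d, h⟩
  · have : d^2 ≥ 0 := by positivity
    omega

theorem sq_mod4 (a : ℤ) : a^2 % 4 = a % 2 := by
  rcases Int.even_or_odd' a with ⟨k, rfl | rfl⟩
  · have : (2*k)^2 = 4*k^2 := by ring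
    omega
  · have := sq_mod8_odd (a := 2*k+1) (by omega)
    omega

/-- opposite parity: `b` is even -/
theorem par_aux {a b f : ℤ} (h : f^2 = a^4+a^2*b^2-b^4) (hp : a % 2 = 0) (hb : b % 2 = 1) : False := by
  obtain ⟨k, rfl⟩ : ∃ k, a = 2*k := ⟨a/2, by omega⟩
  have e : f^2 = 4*(4*k^4+k^2*b^2) - (b^2)^2 := by rw [h]; ring
  have h1 := sq_mod4 f
  have h2 := sq_mod4 (b^2)
  have h3 := sq_mod4 b
  omega

theorem Q_even (n : ℕ) : ∀ X Y S : ℤ, Y.natAbs ≤ n → IsCoprime X Y → Y % 2 = 0 →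
    S^2 = X^4+X^2*Y^2-Y^4 → Y = 0 := by
  induction n with
  | zero => intro X Y S h _ _ _; omega
  | succ n ih =>
    intro X Y S hn hc hY h
    by_contra hY0
    obtain ⟨y, rfl⟩ : ∃ y, Y = 2*y := ⟨Y/2, by omega⟩
    have hy0 : y ≠ 0 := by omega
    have hXo : X % 2 = 1 := by
      by_contra h'
      exact cop_absurd hc Int.prime_two (by omega) (by omega)
    have hX8 := sq_mod8_odd hXo
    have hSo : S % 2 = 1 := by
      have h1 := sq_mod4 S
      have h2 := sq_mod4 (X^2)
      have : S^2 = (X^2)^2 + 4*(X^2*y^2-4*y^4) := by rw [h]; ring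
      omega
    obtain ⟨A, hA⟩ : ∃ A, X^2+2*y^2-S = 2*A := ⟨(X^2+2*y^2-S)/2, by omega⟩
    obtain ⟨B, hB⟩ : ∃ A, X^2+2*y^2+S = 2*A := ⟨(X^2+2*y^2+S)/2, by omega⟩
    have hAB : A*B = 5*y^4 := by
      have : (2*A)*(2*B) = 4*(5*y^4) := by rw [← hA, ← hB]; linear_combination -h
      linarith
    have hsum : A + B = X^2+2*y^2 := by linarith
    have hX0 : X ≠ 0 := by omega
    obtain ⟨hAp, hBp⟩ : 0 < A ∧ 0 < B := both_pos (by rw [hAB]; positivity) (by rw [hsum]; positivity)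
    have hcAB : IsCoprime A B := by
      apply int_cop (by omega)
      intro p hp h1 h2
      have h3 : p ∣ X^2+2*y^2 := hsum ▸ dvd_add h1 h2
      have h4 : p ∣ 5*y^4 := hAB ▸ h1.mul_right _
      have h5 : p ∣ y := by
        rcases hp.dvd_or_dvd h4 with h4 | h4
        · have h5 := prime_dvd_five hp h4
          have := five_res (h5.trans h3)
          exact (hp.associated_of_dvd p5' h4).dvd.trans this.2
        · exact hp.dvd_of_dvd_pow h4
      have h6 : p ∣ X^2 := by
        have : X^2 = (X^2+2*y^2) - y*(2*y) := by ring
        rw [this]; exact dvd_sub h3 (h5.mul_right _)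
      exact cop_absurd hc hp (hp.dvd_of_dvd_pow h6) (h5.mul_left _)
    obtain ⟨f, g, rfl, hfg, hs⟩ := five_fourth hcAB hAp hBp hAB
    have hX2 : (f^2-g^2)^2 + (2*g^2)^2 = X^2 := by linear_combination hsum - hs
    have hfo : (f^2-g^2) % 2 = 1 := by
      by_contra h'
      have : (f^2-g^2)^2 % 4 = (f^2-g^2) % 2 := sq_mod4 _
      have : (2*g^2)^2 = 4*(g^4) := by ring
      omega
    have hco : IsCoprime (f^2-g^2) (2*g^2) := by
      apply int_cop (by omega)
      intro p hp h1 h2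
      have hg : p ∣ g := by
        rcases hp.dvd_or_dvd h2 with h2 | h2
        · exfalso
          have := ((hp.associated_of_dvd Int.prime_two h2).symm.dvd).trans h1
          omega
        · exact hp.dvd_of_dvd_pow h2
      have hf : p ∣ f^2 := by
        have : f^2 = (f^2-g^2) + g*g := by ring
        rw [this]; exact dvd_add h1 (hg.mul_right _)
      exact cop_absurd hfg hp (hp.dvd_of_dvd_pow hf) hg
    obtain ⟨m, n', h1, h2, -, hmn, hpar, hm0⟩ := pyth hco hfo hX2
    have hg0 : g ≠ 0 := right_ne_zero_of_mul hy0
    have hf0 : f ≠ 0 := left_ne_zero_of_mul hy0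
    have hgmn : m*n' = g^2 := by linarith
    have hgp : 0 < g^2 := by positivity
    have hm : 0 < m := by
      rcases hm0.lt_or_eq with h | h
      · exact h
      · rw [← h, zero_mul] at hgmn; omega
    have hn' : 0 < n' := by
      by_contra hh
      nlinarith
    obtain ⟨a, rfl⟩ := pos_sq hmn hm hgmn
    obtain ⟨b, rfl⟩ := pos_sq hmn.symm hn' (by rw [mul_comm]; exact hgmn)
    have hab : IsCoprime a b := (IsCoprime.pow_iff (by norm_num) (by norm_num)).1 hmn
    have hE : f^2 = a^4+a^2*b^2-b^4 := by linear_combination h1 - hgmn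
    have ha4 := sq_mod4 a
    have hb4 := sq_mod4 b
    have hb2 : b % 2 = 0 := by
      by_contra h'
      exact par_aux hE (by omega) (by omega)
    have hb0 : b ≠ 0 := by rintro rfl; simp at hn'
    have ha0 : a ≠ 0 := by rintro rfl; simp at hm
    refine hb0 (ih a b f ?_ hab hb2 hE)
    have h3 : g.natAbs = a.natAbs * b.natAbs := by
      rw [← Int.natAbs_mul]; apply Int.natAbs_eq_iff_sq_eq.2; rw [← hgmn]; ring
    have h4 : (2*(f*g)).natAbs = 2*(f.natAbs*(a.natAbs*b.natAbs)) := by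
      rw [Int.natAbs_mul, Int.natAbs_mul, h3]; rfl
    have h5 : 1 ≤ f.natAbs * a.natAbs := Nat.mul_pos (by omega) (by omega)
    have h6 : b.natAbs ≤ f.natAbs*(a.natAbs*b.natAbs) := by
      rw [← mul_assoc]; exact Nat.le_mul_of_pos_left _ h5
    omega

theorem Q_odd (n : ℕ) : ∀ X Y S : ℤ, Y.natAbs ≤ n → IsCoprime X Y → X % 2 = 1 → Y % 2 = 1 →
    S^2 = X^4+X^2*Y^2-Y^4 → X^2 = 1 ∧ Y^2 = 1 := by
  induction n with
  | zero => intro X Y S h _ _ _; omega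
  | succ n ih =>
    intro X Y S hn hc hXo hY h
    have hY0 : Y ≠ 0 := by omega
    have hX0 : X ≠ 0 := by omega
    have hX4 := sq_mod4 X
    have hY4 := sq_mod4 Y
    obtain ⟨A, hA⟩ : ∃ A, A = 2*X^2+Y^2-2*S := ⟨_, rfl⟩
    obtain ⟨B, hB⟩ : ∃ A, A = 2*X^2+Y^2+2*S := ⟨_, rfl⟩
    have hAB : A*B = 5*Y^4 := by
      rw [hA, hB]; linear_combination -4*h
    have hsum : A + B = 2*(2*X^2+Y^2) := by linarith
    obtain ⟨hAp, hBp⟩ : 0 < A ∧ 0 < B := both_pos (by rw [hAB]; positivity) (by rw [hsum]; positivity)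
    have hcAB : IsCoprime A B := by
      apply int_cop (by omega)
      intro p hp h1 h2
      have hp2 : ¬ p ∣ 2 := by
        intro h3
        have := ((hp.associated_of_dvd Int.prime_two h3).symm.dvd).trans h1
        omega
      have h3 : p ∣ 2*X^2+Y^2 := (hp.dvd_or_dvd (hsum ▸ dvd_add h1 h2)).resolve_left hp2
      have h4 : p ∣ 5*Y^4 := hAB ▸ h1.mul_right _
      have h5 : p ∣ Y := by
        rcases hp.dvd_or_dvd h4 with h4 | h4
        · have h5 := prime_dvd_five hp h4
          have := five_res (X := Y) (Y := X) (by rw [add_comm]; exact (h5.trans h3))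
          exact (hp.associated_of_dvd p5' h4).dvd.trans this.1
        · exact hp.dvd_of_dvd_pow h4
      have h6 : p ∣ 2*X^2 := by
        have : 2*X^2 = (2*X^2+Y^2) - Y*Y := by ring
        rw [this]; exact dvd_sub h3 (h5.mul_right _)
      exact cop_absurd hc hp (hp.dvd_of_dvd_pow ((hp.dvd_or_dvd h6).resolve_left hp2)) h5
    obtain ⟨f, g, rfl, hfg, hs⟩ := five_fourth hcAB hAp hBp hAB
    have hfo : f % 2 = 1 := by
      rcases Int.even_or_odd' f with ⟨k, hk | hk⟩
      · exfalso
        have : f*g = 2*(k*g) := by rw [hk]; ring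
        omega
      · omega
    have hgo : g % 2 = 1 := by
      rcases Int.even_or_odd' g with ⟨k, hk | hk⟩
      · exfalso
        have : f*g = 2*(f*k) := by rw [hk]; ring
        omega
      · omega
    have hf8 := sq_mod8_odd hfo
    have hg8 := sq_mod8_odd hgo
    obtain ⟨H, hH⟩ : ∃ H, f^2 - g^2 = 2*H := ⟨(f^2-g^2)/2, by omega⟩
    have hX2 : (g^2)^2 + H^2 = X^2 := by
      have : 4*((g^2)^2 + H^2) = 4*X^2 := by
        have : 4*H^2 = (f^2-g^2)^2 := by rw [hH]; ring
        linear_combination this + hsum - hs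
      linarith
    have hco : IsCoprime (g^2) H := by
      apply int_cop (by omega)
      intro p hp h1 h2
      have hg := hp.dvd_of_dvd_pow h1
      have hf : p ∣ f^2 := by
        have : f^2 = 2*H + g^2 := by linarith
        rw [this]; exact dvd_add (h2.mul_left _) h1
      exact cop_absurd hfg hp (hp.dvd_of_dvd_pow hf) hg
    obtain ⟨a, b, h1, h2, -, hab, hpar, ha0⟩ := pyth hco (by omega) hX2
    have hgb : g^2 + b^2 = a^2 := by linarith
    have hco2 : IsCoprime g b := by
      apply int_cop (by omega)
      intro p hp h3 h4
      have : p ∣ a^2 := by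
        rw [← hgb, pow_two, pow_two]; exact dvd_add (h3.mul_right _) (h4.mul_right _)
      exact cop_absurd hab hp (hp.dvd_of_dvd_pow this) h4
    obtain ⟨c, d, h3, h4, h5, hcd, hpar2, -⟩ := pyth hco2 hgo hgb
    have ha : a = c^2+d^2 := by
      rcases sq_eq_sq_iff_eq_or_eq_neg.1 h5 with h | h
      · exact h
      · nlinarith [sq_nonneg c, sq_nonneg d]
    have hE : f^2 = (c+d)^4 + (c+d)^2*(c-d)^2 - (c-d)^4 := by
      have : f^2 = g^2 + 2*(2*a*b) := by rw [← h2]; linarith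
      rw [this, h3, h4, ha]; ring
    have hg' : g = (c+d)*(c-d) := by rw [h3]; ring
    have hco3 : IsCoprime (c+d) (c-d) := by
      apply int_cop (by omega)
      intro p hp h6 h7
      have hp2 : ¬ p ∣ 2 := by
        intro h3
        have := ((hp.associated_of_dvd Int.prime_two h3).symm.dvd).trans h6
        omega
      have h8 : p ∣ 2*c := by
        have : 2*c = (c+d)+(c-d) := by ring
        rw [this]; exact dvd_add h6 h7
      have h9 : p ∣ 2*d := by
        have : 2*d = (c+d)-(c-d) := by ring
        rw [this]; exact dvd_sub h6 h7
      exact cop_absurd hcd hp ((hp.dvd_or_dvd h8).resolve_left hp2) ((hp.dvd_or_dvd h9).resolve_left hp2)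
    obtain ⟨P, hP⟩ : ∃ P, P = c+d := ⟨_, rfl⟩
    obtain ⟨M, hM⟩ : ∃ P, P = c-d := ⟨_, rfl⟩
    rw [← hP, ← hM] at hE hg' hco3
    have hPo : P % 2 = 1 := by omega
    have hMo : M % 2 = 1 := by omega
    have hres : P^2 = 1 ∧ M^2 = 1 := by
      by_cases hlt : M.natAbs ≤ n
      · exact ih P M f hlt hco3 hPo hMo hE
      · have e1 : (f*g).natAbs = (f.natAbs*P.natAbs)*M.natAbs := by
          rw [hg', Int.natAbs_mul, Int.natAbs_mul, mul_assoc]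
        have e2 : f.natAbs*P.natAbs = 1 := by
          have : 1 ≤ f.natAbs * P.natAbs := Nat.mul_pos (by omega) (by omega)
          by_contra hne
          have : 2 ≤ f.natAbs*P.natAbs := by omega
          have := Nat.mul_le_mul_right M.natAbs this
          omega
        have e3 := Nat.eq_one_of_mul_eq_one_right e2
        have e4 := Nat.eq_one_of_mul_eq_one_left e2
        have f1 : f^2 = 1 := by rw [← Int.natAbs_sq, e3]; norm_num
        have P1 : P^2 = 1 := by rw [← Int.natAbs_sq, e4]; norm_num
        refine ⟨P1, ?_⟩
        have : M^2*(M^2-1) = 0 := by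
          have : P^4 = (P^2)^2 := by ring
          rw [f1, this, P1] at hE
          linear_combination hE
        rcases mul_eq_zero.1 this with h | h
        · have : M = 0 := pow_eq_zero_iff two_ne_zero |>.1 h
          omega
        · linarith
    have f1 : f^2 = 1 := by
      have e1 : P^4 = (P^2)^2 := by ring
      have e2 : M^4 = (M^2)^2 := by ring
      rw [e1, e2, hres.1, hres.2] at hE; linarith
    have g1 : g^2 = 1 := by rw [hg', mul_pow, hres.1, hres.2]; norm_num
    have H0 : H = 0 := by rw [f1, g1] at hH; linarith
    constructor
    · rw [← hX2, g1, H0]; norm_num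
    · rw [mul_pow, f1, g1]; norm_num

theorem case1 {r s x y : ℤ} (hrs : IsCoprime r s) (hr0 : r ≠ 0) (hs0 : s ≠ 0)
    (h1 : r^2 + 4*s^2 = x^2) (h2 : r^4 + 4*s^2*(r-s)^2 = y^2) : False := by
  rcases Int.even_or_odd' r with ⟨R, rfl | hR⟩
  · have hs : s % 2 = 1 := by
      by_contra h
      exact cop_absurd hrs Int.prime_two ⟨R, rfl⟩ (by omega)
    have hR0 : R ≠ 0 := by omega
    have hcR := hrs.of_mul_left_right
    obtain ⟨y1, rfl⟩ : ∃ k, y = 2*k := by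
      rcases Int.even_or_odd' y with ⟨k, h | h⟩
      · exact ⟨k, h⟩
      · have := sq_mod8_odd (a := y) (by omega)
        have e : (2*R)^4 + 4*s^2*(2*R-s)^2 = 4*(4*R^4 + s^2*(2*R-s)^2) := by ring
        omega
    have hodd : (s*(s-2*R)) % 2 = 1 := by
      have : s*(s-2*R) = s^2 - 2*(s*R) := by ring
      have := sq_mod4 s
      omega
    have h3 : (s*(s-2*R))^2 + (2*R^2)^2 = y1^2 := by linarith
    have hco : IsCoprime (s*(s-2*R)) (2*R^2) := by
      apply int_cop (by omega)
      intro p hp h1 h2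
      have hR : p ∣ R := by
        rcases hp.dvd_or_dvd h2 with h2 | h2
        · exfalso
          have := ((hp.associated_of_dvd Int.prime_two h2).symm.dvd).trans h1
          omega
        · exact hp.dvd_of_dvd_pow h2
      have hs : p ∣ s^2 := by
        have : s^2 = s*(s-2*R) + R*(2*s) := by ring
        rw [this]; exact dvd_add h1 (hR.mul_right _)
      exact cop_absurd hcR hp hR (hp.dvd_of_dvd_pow hs)
    obtain ⟨m, n', h1, h2, -, hmn, hpar, hm0⟩ := pyth hco hodd h3
    have hgmn : m*n' = R^2 := by linarith
    have hgp : 0 < R^2 := by positivity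
    have hm : 0 < m := by
      rcases hm0.lt_or_eq with h | h
      · exact h
      · rw [← h, zero_mul] at hgmn; omega
    have hn' : 0 < n' := by
      by_contra hh
      nlinarith
    obtain ⟨a, rfl⟩ := pos_sq hmn hm hgmn
    obtain ⟨b, rfl⟩ := pos_sq hmn.symm hn' (by rw [mul_comm]; exact hgmn)
    have hab : IsCoprime a b := (IsCoprime.pow_iff (by norm_num) (by norm_num)).1 hmn
    have hE : (s-R)^2 = a^4+a^2*b^2-b^4 := by linear_combination h1 - hgmn
    have ha4 := sq_mod4 a
    have hb4 := sq_mod4 b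
    have hb2 : b % 2 = 0 := by
      by_contra h'
      exact par_aux hE (by omega) (by omega)
    have hb0 : b ≠ 0 := by rintro rfl; simp at hn'
    exact hb0 (Q_even _ a b _ le_rfl hab hb2 hE)
  · have hr : r % 2 = 1 := by omega
    have hr4 := sq_mod4 r
    have h3 : (r^2)^2 + (2*(s*(r-s)))^2 = y^2 := by linarith
    have hco : IsCoprime (r^2) (2*(s*(r-s))) := by
      apply int_cop (by omega)
      intro p hp h1 h2
      have hpr := hp.dvd_of_dvd_pow h1
      have hs : p ∣ s := by
        rcases hp.dvd_or_dvd h2 with h2 | h2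
        · exfalso
          have := ((hp.associated_of_dvd Int.prime_two h2).symm.dvd).trans h1
          omega
        · rcases hp.dvd_or_dvd h2 with h2 | h2
          · exact h2
          · have : s = r - (r-s) := by ring
            rw [this]; exact dvd_sub hpr h2
      exact cop_absurd hrs hp hpr hs
    obtain ⟨a, b, e1, e2, -, hab, hpar, ha0⟩ := pyth hco (by omega) h3
    have hgb : r^2 + b^2 = a^2 := by linarith
    have hco2 : IsCoprime r b := by
      apply int_cop (by omega)
      intro p hp h3 h4
      have : p ∣ a^2 := by
        rw [← hgb, pow_two, pow_two]; exact dvd_add (h3.mul_right _) (h4.mul_right _)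
      exact cop_absurd hab hp (hp.dvd_of_dvd_pow this) h4
    obtain ⟨c, d, e3, e4, e5, hcd, hpar2, -⟩ := pyth hco2 hr hgb
    have ha : a = c^2+d^2 := by
      rcases sq_eq_sq_iff_eq_or_eq_neg.1 e5 with h | h
      · exact h
      · nlinarith [sq_nonneg c, sq_nonneg d]
    have e6 : s*(r-s) = a*b := by linarith
    have hE : (2*s-r)^2 = (c-d)^4 + (c-d)^2*(c+d)^2 - (c+d)^4 := by
      have : (2*s-r)^2 = r^2 - 4*(a*b) := by rw [← e6]; ring
      rw [this, e3, e4, ha]; ring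
    have hco3 : IsCoprime (c-d) (c+d) := by
      apply int_cop (by omega)
      intro p hp h7 h6
      have hp2 : ¬ p ∣ 2 := by
        intro h3
        have := ((hp.associated_of_dvd Int.prime_two h3).symm.dvd).trans h6
        omega
      have h8 : p ∣ 2*c := by
        have : 2*c = (c+d)+(c-d) := by ring
        rw [this]; exact dvd_add h6 h7
      have h9 : p ∣ 2*d := by
        have : 2*d = (c+d)-(c-d) := by ring
        rw [this]; exact dvd_sub h6 h7
      exact cop_absurd hcd hp ((hp.dvd_or_dvd h8).resolve_left hp2) ((hp.dvd_or_dvd h9).resolve_left hp2)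
    obtain ⟨u1, u2⟩ := Q_odd _ _ _ _ le_rfl hco3 (by omega) (by omega) hE
    have hcd0 : b = 0 := by
      rw [e4]; linarith
    have : r - s = 0 := by
      rw [hcd0, mul_zero] at e6
      exact (mul_eq_zero.1 e6).resolve_left hs0
    have hsr : s = r := by linarith
    have hr1 : r^2 = 1 := by
      have : r = (c-d)*(c+d) := by rw [e3]; ring
      rw [this, mul_pow, u1, u2]; norm_num
    rw [hsr, hr1] at h1
    have h5 : x^2 = 5 := by linarith
    have : x < 3 := by nlinarith
    have : -3 < x := by nlinarith
    interval_cases x <;> omega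

theorem split_sq {A B W : ℤ} (hA : 0 < A) (h : A*B = W^2) :
    ∃ (a : ℕ) (x y : ℤ), Squarefree a ∧ A = a*x^2 ∧ B = a*y^2 := by
  obtain ⟨a, b, hab, hsf⟩ := Nat.sq_mul_squarefree A.natAbs
  have hAe : A = (b:ℤ)^2*a := by
    have : (A.natAbs : ℤ) = A := Int.natAbs_of_nonneg hA.le
    rw [← this, ← hab]; push_cast; ring
  have hsf' : Squarefree (a:ℤ) := Int.squarefree_natCast.2 hsf
  have hb0 : (b:ℤ) ≠ 0 := by
    intro h0; rw [h0] at hAe; simp at hAe; omega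
  have ha0 : (a:ℤ) ≠ 0 := by
    intro h0; rw [h0] at hAe; simp at hAe; omega
  have hbW : (b:ℤ) ∣ W := by
    have : (b:ℤ)^2 ∣ W^2 := ⟨a*B, by rw [← h, hAe]; ring⟩
    exact (Int.pow_dvd_pow_iff two_ne_zero).1 this
  obtain ⟨V, rfl⟩ := hbW
  have h2 : (a:ℤ)*B = V^2 := by
    apply mul_left_cancel₀ (pow_ne_zero 2 hb0)
    rw [hAe] at h; linear_combination h
  have h3 : (a:ℤ) ∣ V := (hsf'.dvd_pow_iff_dvd two_ne_zero).1 ⟨B, h2.symm⟩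
  obtain ⟨y, rfl⟩ := h3
  refine ⟨a, b, y, hsf, by rw [hAe]; ring, ?_⟩
  apply mul_left_cancel₀ ha0
  rw [h2]; ring

theorem a_cases {a : ℕ} (hsf : Squarefree a) (h : ∀ p, p.Prime → p ∣ a → p = 17) : a = 1 ∨ a = 17 := by
  by_cases h1 : a = 1
  · exact Or.inl h1
  right
  obtain ⟨p, hp, hpa⟩ := Nat.exists_prime_and_dvd h1
  have h17 := h p hp hpa
  subst h17
  obtain ⟨b, rfl⟩ := hpa
  by_cases hb : b = 1
  · rw [hb]
  exfalso
  obtain ⟨q, hq, hqb⟩ := Nat.exists_prime_and_dvd hb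
  have := h q hq (hqb.mul_left _)
  subst this
  have := hsf 17 (Nat.mul_dvd_mul_left 17 hqb)
  rw [Nat.isUnit_iff] at this; omega

theorem int_main {r s W : ℤ} (hrs : IsCoprime r s) (hr0 : r ≠ 0) (hs0 : s ≠ 0)
    (h : (r^2+4*s^2)*(r^4+4*s^2*(r-s)^2) = W^2) : s = 2*r := by
  obtain ⟨a, x, y, hsf, h1, h2⟩ := split_sq (by positivity) h
  have hp17 : ∀ p : ℕ, p.Prime → p ∣ a → p = 17 := by
    intro p hp hpa
    have hpi : Prime (p:ℤ) := Nat.prime_iff_prime_int.1 hp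
    have hpa' : (p:ℤ) ∣ a := by exact_mod_cast hpa
    have d1 : (p:ℤ) ∣ r^2+4*s^2 := h1 ▸ hpa'.mul_right _
    have d2 : (p:ℤ) ∣ r^4+4*s^2*(r-s)^2 := h2 ▸ hpa'.mul_right _
    by_cases h2p : p = 2
    · exfalso
      subst h2p
      have hr4 := sq_mod4 r
      push_cast at d1
      obtain ⟨R, rfl⟩ : ∃ R, r = 2*R := ⟨r/2, by omega⟩
      have hs : s % 2 = 1 := by
        by_contra h
        exact cop_absurd hrs Int.prime_two ⟨R, rfl⟩ (by omega)
      obtain ⟨b, rfl⟩ := hpa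
      have hb : b % 2 = 1 := by
        by_contra hb
        have := hsf 2 (Nat.mul_dvd_mul_left 2 (by omega))
        rw [Nat.isUnit_iff] at this; omega
      push_cast at h2
      have h3 : (b:ℤ)*y^2 = 2*(4*R^4 + (s*(s-2*R))^2) := by linarith
      have hodd : (s*(s-2*R)) % 2 = 1 := by
        have : s*(s-2*R) = s^2 - 2*(s*R) := by ring
        have := sq_mod4 s
        omega
      have h4 := sq_mod4 (s*(s-2*R))
      rcases Int.even_or_odd' y with ⟨k, hk | hk⟩
      · have : (b:ℤ)*y^2 = 4*(b*k^2) := by rw [hk]; ring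
        omega
      · obtain ⟨c, hc⟩ : ∃ c:ℤ, (b:ℤ) = 2*c+1 := ⟨b/2, by omega⟩
        have : (b:ℤ)*y^2 = 2*(c*y^2) + y^2 := by rw [hc]; ring
        have := sq_mod4 y
        omega
    · have hn2 : ¬ (p:ℤ) ∣ 2 := by
        intro h
        have : p ∣ 2 := by exact_mod_cast h
        exact h2p ((Nat.prime_dvd_prime_iff_eq hp Nat.prime_two).1 this)
      have hns : ¬ (p:ℤ) ∣ s := by
        intro h
        have : (p:ℤ) ∣ r^2 := by
          have e : r^2 = (r^2+4*s^2) - s*(4*s) := by ring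
          rw [e]; exact dvd_sub d1 (h.mul_right _)
        exact cop_absurd hrs hpi (hpi.dvd_of_dvd_pow this) h
      have d3 : (p:ℤ) ∣ 2*(2*(s^3*(s-2*r))) := by
        have e : 2*(2*(s^3*(s-2*r))) = (r^4+4*s^2*(r-s)^2) - (r^2+4*s^2)*r^2 := by ring
        rw [e]; exact dvd_sub d2 (d1.mul_right _)
      have d4 := (hpi.dvd_or_dvd ((hpi.dvd_or_dvd d3).resolve_left hn2)).resolve_left hn2
      have d5 := (hpi.dvd_or_dvd d4).resolve_left (fun h => hns (hpi.dvd_of_dvd_pow h))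
      have d6 : (p:ℤ) ∣ 17*r^2 := by
        have e : 17*r^2 = (r^2+4*s^2) - (s-2*r)*(4*(s+2*r)) := by ring
        rw [e]; exact dvd_sub d1 (d5.mul_right _)
      rcases hpi.dvd_or_dvd d6 with h | h
      · have : p ∣ 17 := by exact_mod_cast h
        exact (Nat.prime_dvd_prime_iff_eq hp (by norm_num)).1 this
      · exfalso
        have hr := hpi.dvd_of_dvd_pow h
        apply hns
        have e : s = (s-2*r) + r*2 := by ring
        rw [e]; exact dvd_add d5 (hr.mul_right _)
  rcases a_cases hsf hp17 with rfl | rfl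
  · exfalso
    push_cast at h1 h2
    rw [one_mul] at h1 h2
    exact case1 hrs hr0 hs0 h1 h2
  · exact case17 hrs hr0 h1 h2

theorem rat_main {u v : ℚ} (hu : u ≠ 0) (hv : v ≠ 0)
    (h : (u ^ 2 + 2 * u - 4) / (8 * u) = (4 - 3 * v - v ^ 3) / (4 * v)) : v = 1/2 := by
  have h1 : u^2*v + 2*u*(v^3+4*v-4) - 4*v = 0 := by
    rw [div_eq_div_iff (by positivity) (by positivity)] at h
    linarith
  have hd : (v.den:ℚ) ≠ 0 := by exact_mod_cast v.den_nz
  have hvs : v*v.den = v.num := Rat.mul_den_eq_num v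
  have h2 : (u*v + (v^3+4*v-4))^2 = (v^2+4)*(v^4+4*(v-1)^2) := by
    linear_combination v*h1
  have h3 : IsSquare ((((v.num^2+4*(v.den:ℤ)^2)*(v.num^4+4*(v.den:ℤ)^2*(v.num-v.den)^2) : ℤ)) : ℚ) := by
    refine ⟨(u*v + (v^3+4*v-4))*v.den^3, ?_⟩
    push_cast
    rw [← hvs]
    linear_combination -(v.den:ℚ)^6*h2
  obtain ⟨W, hW⟩ := Rat.isSquare_intCast_iff.1 h3
  have hco : IsCoprime v.num (v.den:ℤ) := by
    rw [Int.isCoprime_iff_gcd_eq_one]; exact v.reduced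
  have := int_main hco (Rat.num_ne_zero.2 hv) (by exact_mod_cast v.den_nz) (W := W) (by rw [hW]; ring)
  have h4 : (v.den:ℚ) = 2*v.num := by exact_mod_cast this
  apply mul_right_cancel₀ hd
  rw [hvs, h4]; ring



/-- `Im λ ∩ Im η = {19/16}`, where `λ(z) = (z² + 2z − 4)/(8z)` and
`η(z) = (4 − 3z − z³)/(4z)`: `19/16` lies in both images, and whenever
`λ(u) = η(v)` with `u, v` nonzero rationals, the common value is `19/16`. -/
theorem lambda_eta_intersection :
    (∃ u : ℚ, u ≠ 0 ∧ (u ^ 2 + 2 * u - 4) / (8 * u) = 19/16) ∧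
    (∃ v : ℚ, v ≠ 0 ∧ (4 - 3 * v - v ^ 3) / (4 * v) = 19/16) ∧
    ∀ u v : ℚ, u ≠ 0 → v ≠ 0 →
      (u ^ 2 + 2 * u - 4) / (8 * u) = (4 - 3 * v - v ^ 3) / (4 * v) →
      (u ^ 2 + 2 * u - 4) / (8 * u) = 19/16 := by
  refine ⟨⟨8, by norm_num, by norm_num⟩, ⟨1/2, by norm_num, by norm_num⟩, ?_⟩
  intro u v hu hv h
  rw [h, rat_main hu hv h]; norm_num
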